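/- arXiv:1909.01564 — 3 statements merged into one kernel-verified Lean document; each statement's English description precedes it below -/
import Mathlib

section
/- Let 𝓕 be a class of finite simple graphs that is closed under isomorphism, hereditary (closed under induced subgraphs), and proper (there exists a finite graph not in 𝓕). Then there exists an integer r such that for every integer m ≥ 1 there is a finite graph G with rankwidth at most r with the property that for every partition of V(G) into m parts, at least one part induces a subgraph that is not in 𝓕. -/
/-!
Fix a graph `H` outside the class, with at least two vertices (isolated vertices may be added), and
let `G_0` be a single vertex and `G_{m+1} = H[G_m]` the lexicographic product, in which every vertex
of `H` is replaced by a copy of `G_m`.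

Every `m`-colouring of `G_m` has a monochromatic induced copy of `H`: for a colour `i`, either each
of the copies of `G_{m-1}` contains a vertex of colour `i`, and one such vertex from each copy gives
an induced `H`; or some copy avoids `i`, and induction applies to it (`exists_lexPower`).

The rankwidth of `G_m` is at most `|H|`. In place of the cut-rank, the argument bounds the number of
neighbourhood types that vertices of `S` have outside `S` (`FewTypes`). This number does not change
when `G` is placed as a module into `H[G]`, and it is at most `|H|` for a union of copies of `G`.
Hence the vertex set of `G_m` can be built up from singletons by disjoint unions that all have at
most `|H|` types (`Hierarchy`). Such a construction is a rooted binary tree, and is turned into a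
rank decomposition by repeatedly joining rooted trees by an edge (`PartialDecomp.join`); the unique
edge leaving a set of tree nodes certifies acyclicity as well as the cut belonging to the edge.
-/


open scoped Classical

/-- The cut-rank of a set `X` of vertices of `G`: the rank, over the two-element field,
of the `X × Xᶜ` matrix whose `(x,y)` entry is `1` iff `x` and `y` are adjacent. -/
noncomputable def cutRank {V : Type} [Fintype V] (G : SimpleGraph V) (X : Set V) : ℕ :=
  Matrix.rank (Matrix.of fun (x : X) (y : ↥(Xᶜ)) => if G.Adj x.1 y.1 then (1 : ZMod 2) else 0)

/-- `G` admits a rank decomposition of width at most `r`: a tree `T` with at least two nodes,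
every node of degree `1` or `3`, a bijection `L` from the vertices of `G` to the leaves of `T`,
such that every edge `uv` of `T` cuts the leaves (hence the vertices of `G`) into two parts of
cut-rank at most `r`. -/
def RankDecompWidthLE {V : Type} [Fintype V] (G : SimpleGraph V) (r : ℕ) : Prop :=
  ∃ (k : ℕ) (T : SimpleGraph (Fin k)), 2 ≤ k ∧ T.IsTree ∧
    (∀ t : Fin k, T.degree t = 1 ∨ T.degree t = 3) ∧
    ∃ L : V ≃ {t : Fin k // T.degree t = 1},
      ∀ u v : Fin k, T.Adj u v →
        cutRank G {x : V | (T.deleteEdges {s(u, v)}).Reachable (L x).1 u} ≤ r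

/-- The rankwidth of a finite graph: the least width of a rank decomposition
(`0` by convention if no rank decomposition exists, e.g. for graphs with fewer
than two vertices). -/
noncomputable def rankw {V : Type} [Fintype V] (G : SimpleGraph V) : ℕ :=
  sInf { r | RankDecompWidthLE G r }

/-- `H` is isomorphic to an induced subgraph of `G`. -/
def IsInducedIn {m n : ℕ} (H : SimpleGraph (Fin m)) (G : SimpleGraph (Fin n)) : Prop :=
  ∃ f : Fin m ↪ Fin n, ∀ u v : Fin m, H.Adj u v ↔ G.Adj (f u) (f v)

/-! ### Cut-rank and neighbourhood types -/

/-- The vertices of `S` have at most `|W|` different neighbourhoods outside `S`, as witnessed by a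
labelling with labels in `W`. -/
def FewTypes {V : Type} (W : Type) (G : SimpleGraph V) (S : Set V) : Prop :=
  ∃ f : V → W, ∀ x ∈ S, ∀ x' ∈ S, f x = f x' → ∀ y ∉ S, (G.Adj x y ↔ G.Adj x' y)

lemma FewTypes.cutRank_le {V W : Type} [Fintype V] [Fintype W] {G : SimpleGraph V} {S : Set V}
    (h : FewTypes W G S) : cutRank G S ≤ Fintype.card W := by
  obtain ⟨f, hf⟩ := h
  unfold cutRank
  -- the matrix factors through the incidence matrix of `S` against the labels
  have key : (Matrix.of fun (x : S) (y : ↥(Sᶜ)) => if G.Adj x.1 y.1 then (1 : ZMod 2) else 0) =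
      (Matrix.of fun (x : S) (w : W) => if f x.1 = w then (1 : ZMod 2) else 0) *
      (Matrix.of fun (w : W) (y : ↥(Sᶜ)) =>
        if ∃ x ∈ S, f x = w ∧ G.Adj x y.1 then (1 : ZMod 2) else 0) := by
    ext x y
    simp only [Matrix.mul_apply, Matrix.of_apply, ite_mul, one_mul, zero_mul, Finset.sum_ite_eq,
      Finset.mem_univ, if_true]
    congr 1
    apply propext
    constructor
    · intro h
      exact ⟨x.1, x.2, rfl, h⟩
    · rintro ⟨x', hx', he, ha⟩
      exact (hf x' hx' x.1 x.2 he y.1 y.2).1 ha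
  rw [key]
  exact (Matrix.rank_mul_le_left _ _).trans (Matrix.rank_le_card_width _)

lemma cutRank_compl {V : Type} [Fintype V] (G : SimpleGraph V) (S : Set V) :
    cutRank G Sᶜ = cutRank G S := by
  unfold cutRank
  let e : ↥(Sᶜᶜ) ≃ S := Equiv.setCongr (compl_compl S)
  have h := (Matrix.rank_transpose _).trans (Matrix.rank_submatrix (Matrix.of fun (x : S)
    (y : ↥(Sᶜ)) => if G.Adj x.1 y.1 then (1 : ZMod 2) else 0) e (Equiv.refl _))
  convert h using 2
  ext x y
  simp [e, Matrix.transpose_apply, G.adj_comm]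

/-- `S` is obtained from single vertices by disjoint unions, each of which has at most `|W|`
neighbourhood types. -/
inductive Hierarchy {V : Type} (W : Type) (G : SimpleGraph V) : Set V → Prop
  | single (v : V) : Hierarchy W G {v}
  | union (A B : Set V) : Hierarchy W G A → Hierarchy W G B → Disjoint A B →
      FewTypes W G (A ∪ B) → Hierarchy W G (A ∪ B)

lemma Hierarchy.nonempty {V W : Type} {G : SimpleGraph V} {S : Set V}
    (h : Hierarchy W G S) : S.Nonempty := by
  induction h with
  | single v => exact Set.singleton_nonempty v
  | union A B _ _ _ _ ih _ => exact ih.mono Set.subset_union_left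

lemma Hierarchy.fewTypes {V W : Type} [Nonempty W] {G : SimpleGraph V} {S : Set V}
    (h : Hierarchy W G S) : FewTypes W G S := by
  cases h with
  | single v =>
    refine ⟨fun _ => Classical.arbitrary W, ?_⟩
    rintro x rfl x' rfl _ y _
    rfl
  | union A B _ _ _ h => exact h

/-! ### Joining rooted trees -/

/-- The disjoint union of two graphs together with an edge between the given roots. -/
def joinGraph {N N' : Type} (T : SimpleGraph N) (ρ : N) (T' : SimpleGraph N') (ρ' : N') :
    SimpleGraph (N ⊕ N') where
  Adj
    | .inl a, .inl b => T.Adj a b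
    | .inr a, .inr b => T'.Adj a b
    | .inl a, .inr b => a = ρ ∧ b = ρ'
    | .inr b, .inl a => a = ρ ∧ b = ρ'
  symm := ⟨by
    rintro (a | a) (b | b) h
    · exact SimpleGraph.Adj.symm (G := T) h
    · exact h
    · exact h
    · exact SimpleGraph.Adj.symm (G := T') h⟩
  loopless := ⟨by
    rintro (a | a) h
    · exact T.loopless.irrefl a h
    · exact T'.loopless.irrefl a h⟩

lemma joinGraph_connected {N N' : Type} {T : SimpleGraph N} {ρ : N} {T' : SimpleGraph N'} {ρ' : N'}
    (h : T.Connected) (h' : T'.Connected) : (joinGraph T ρ T' ρ').Connected := by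
  have hl : ∀ a b, (joinGraph T ρ T' ρ').Reachable (.inl a) (.inl b) := fun a b =>
    (h.preconnected a b).map (⟨Sum.inl, fun h => h⟩ : T →g joinGraph T ρ T' ρ')
  have hr : ∀ a b, (joinGraph T ρ T' ρ').Reachable (.inr a) (.inr b) := fun a b =>
    (h'.preconnected a b).map (⟨Sum.inr, fun h => h⟩ : T' →g joinGraph T ρ T' ρ')
  have hm : (joinGraph T ρ T' ρ').Reachable (.inl ρ) (.inr ρ') :=
    SimpleGraph.Adj.reachable (show ρ = ρ ∧ ρ' = ρ' from ⟨rfl, rfl⟩)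
  rw [SimpleGraph.connected_iff_exists_forall_reachable]
  refine ⟨.inl ρ, ?_⟩
  rintro (a | a)
  · exact hl _ _
  · exact hm.trans (hr _ _)

lemma joinGraph_ncard_inl {N N' : Type} [Finite N] {T : SimpleGraph N} {ρ : N}
    {T' : SimpleGraph N'} {ρ' : N'} (a : N) :
    ((joinGraph T ρ T' ρ').neighborSet (.inl a)).ncard =
      (T.neighborSet a).ncard + if a = ρ then 1 else 0 := by
  have hi := Set.ncard_image_of_injective (T.neighborSet a) (Sum.inl_injective (β := N'))
  split_ifs with h
  · rw [← hi, ← Set.ncard_insert_of_notMem (a := Sum.inr ρ') (by simp) (Set.toFinite _)]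
    congr 1
    ext (b | b) <;> simp [joinGraph, h]
  · rw [← hi, add_zero]
    congr 1
    ext (b | b) <;> simp [joinGraph, h]

lemma joinGraph_ncard_inr {N N' : Type} [Finite N'] {T : SimpleGraph N} {ρ : N}
    {T' : SimpleGraph N'} {ρ' : N'} (a : N') :
    ((joinGraph T ρ T' ρ').neighborSet (.inr a)).ncard =
      (T'.neighborSet a).ncard + if a = ρ' then 1 else 0 := by
  have hi := Set.ncard_image_of_injective (T'.neighborSet a) (Sum.inr_injective (α := N))
  split_ifs with h
  · rw [← hi, ← Set.ncard_insert_of_notMem (a := Sum.inl ρ) (by simp) (Set.toFinite _)]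
    congr 1
    ext (b | b) <;> simp [joinGraph, h]
  · rw [← hi, add_zero]
    congr 1
    ext (b | b) <;> simp [joinGraph, h]

/-- The degree `d` a node of a rank decomposition may have: `1` if it carries a vertex (`p`), and
`3` otherwise. -/
def DegOk (p : Prop) (d : ℕ) : Prop := (p ∧ d = 1) ∨ (¬ p ∧ d = 3)

/-- A rooted tree `T` whose leaves carry, through `L`, the vertices in `S`; the values of `L`
outside `S` are irrelevant. The degree condition is not imposed at the root `ρ`. Each edge is
certified by the set `A` of nodes on its side away from the root: it is the only edge leaving `A`,
and the vertices carried by `A` have cut-rank at most `r` in the whole graph `G`. -/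
structure PartialDecomp {V N : Type} [Fintype V] (G : SimpleGraph V) (r : ℕ) (S : Set V)
    (T : SimpleGraph N) (ρ : N) (L : V → N) : Prop where
  finite : Finite N
  connected : T.Connected
  cut : ∀ u v, T.Adj u v → ∃ A : Set N, ρ ∉ A ∧ (¬ (u ∈ A ↔ v ∈ A)) ∧
    (∀ a ∈ A, ∀ b ∉ A, T.Adj a b → s(a, b) = s(u, v)) ∧ cutRank G {x | x ∈ S ∧ L x ∈ A} ≤ r
  inj : Set.InjOn L S
  deg : ∀ t, t ≠ ρ → DegOk (t ∈ L '' S) (T.neighborSet t).ncard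

/-- The labelling of the join of two trees that carry the vertices in `S` and those outside `S`. -/
noncomputable def joinLabel {V N N' : Type} (S : Set V) (L : V → N) (L' : V → N') (v : V) :
    N ⊕ N' :=
  if v ∈ S then .inl (L v) else .inr (L' v)

lemma inl_mem_joinLabel {V N N' : Type} {S S' : Set V} {L : V → N} {L' : V → N'}
    (a : N) : Sum.inl a ∈ joinLabel S L L' '' (S ∪ S') ↔ a ∈ L '' S := by
  constructor
  · rintro ⟨v, hv, h⟩
    unfold joinLabel at h
    split_ifs at h with hs
    exact ⟨v, hs, Sum.inl_injective h⟩
  · rintro ⟨v, hv, rfl⟩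
    exact ⟨v, Or.inl hv, if_pos hv⟩

lemma inr_mem_joinLabel {V N N' : Type} {S S' : Set V} {L : V → N} {L' : V → N'}
    (hd : Disjoint S S') (a : N') :
    Sum.inr a ∈ joinLabel S L L' '' (S ∪ S') ↔ a ∈ L' '' S' := by
  constructor
  · rintro ⟨v, hv, h⟩
    unfold joinLabel at h
    split_ifs at h with hs
    exact ⟨v, hv.resolve_left hs, Sum.inr_injective h⟩
  · rintro ⟨v, hv, rfl⟩
    exact ⟨v, Or.inr hv, if_neg (Set.disjoint_right.1 hd hv)⟩

/-- Joining two rooted trees by an edge between their roots; the root of the second tree is kept,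
so the root of the first one must reach an admissible degree. -/
lemma PartialDecomp.join {V N N' : Type} [Fintype V] {G : SimpleGraph V} {r : ℕ} {S S' : Set V}
    {T : SimpleGraph N} {ρ : N} {L : V → N} {T' : SimpleGraph N'} {ρ' : N'} {L' : V → N'}
    (h : PartialDecomp G r S T ρ L) (h' : PartialDecomp G r S' T' ρ' L') (hd : Disjoint S S')
    (hdeg : DegOk (ρ ∈ L '' S) ((T.neighborSet ρ).ncard + 1)) (hS : cutRank G S ≤ r) :
    PartialDecomp G r (S ∪ S') (joinGraph T ρ T' ρ') (.inr ρ') (joinLabel S L L') := by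
  have := h.finite
  have := h'.finite
  have hlS : ∀ A : Set N, {x | x ∈ S ∪ S' ∧ joinLabel S L L' x ∈ (Sum.inl '' A : Set (N ⊕ N'))} =
      {x | x ∈ S ∧ L x ∈ A} := by
    intro A
    ext x
    by_cases hx : x ∈ S <;> simp [joinLabel, hx]
  have hrS : ∀ A : Set N', {x | x ∈ S ∪ S' ∧ joinLabel S L L' x ∈ (Sum.inr '' A : Set (N ⊕ N'))} =
      {x | x ∈ S' ∧ L' x ∈ A} := by
    intro A
    ext x
    by_cases hx : x ∈ S
    · have := Set.disjoint_left.1 hd hx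
      simp [joinLabel, hx, this]
    · simp [joinLabel, hx]
  have hnew : ∀ u v, s(u, v) = s(Sum.inl ρ, Sum.inr ρ') → ∃ A : Set (N ⊕ N'), Sum.inr ρ' ∉ A ∧
      (¬ (u ∈ A ↔ v ∈ A)) ∧
      (∀ a ∈ A, ∀ b ∉ A, (joinGraph T ρ T' ρ').Adj a b → s(a, b) = s(u, v)) ∧
      cutRank G {x | x ∈ S ∪ S' ∧ joinLabel S L L' x ∈ A} ≤ r := by
    intro u v huv
    refine ⟨Sum.inl '' Set.univ, by simp, ?_, ?_, ?_⟩
    · rcases Sym2.eq_iff.1 huv with ⟨rfl, rfl⟩ | ⟨rfl, rfl⟩ <;> simp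
    · rintro (a | a) ha (b | b) hb hab
      · simp at hb
      · obtain ⟨rfl, rfl⟩ := hab
        exact huv.symm
      · simp at ha
      · simp at ha
    · rw [hlS]
      simpa using hS
  refine ⟨inferInstance, joinGraph_connected h.connected h'.connected, ?_, ?_, ?_⟩
  · rintro (u | u) (v | v) huv
    · obtain ⟨A, h1, h2, h3, h4⟩ := h.cut u v huv
      refine ⟨Sum.inl '' A, by simp, by simpa using h2, ?_, by rw [hlS]; exact h4⟩
      rintro (a | a) ha (b | b) hb hab
      · have := h3 a (by simpa using ha) b (by simpa using hb) hab
        rw [Sym2.eq_iff] at this ⊢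
        simpa using this
      · obtain ⟨rfl, rfl⟩ := hab
        simp [h1] at ha
      · simp at ha
      · simp at ha
    · obtain ⟨rfl, rfl⟩ := huv
      exact hnew _ _ rfl
    · obtain ⟨rfl, rfl⟩ := huv
      exact hnew _ _ Sym2.eq_swap
    · obtain ⟨A, h1, h2, h3, h4⟩ := h'.cut u v huv
      refine ⟨Sum.inr '' A, by simpa using h1, by simpa using h2, ?_, by rw [hrS]; exact h4⟩
      rintro (a | a) ha (b | b) hb hab
      · simp at ha
      · simp at ha
      · obtain ⟨rfl, rfl⟩ := hab
        simp [h1] at ha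
      · have := h3 a (by simpa using ha) b (by simpa using hb) hab
        rw [Sym2.eq_iff] at this ⊢
        simpa using this
  · intro x hx y hy hxy
    unfold joinLabel at hxy
    split_ifs at hxy with h1 h2 h2
    · exact h.inj h1 h2 (Sum.inl_injective hxy)
    · exact h'.inj (hx.resolve_left h1) (hy.resolve_left h2) (Sum.inr_injective hxy)
  · rintro (t | t) ht
    · rw [inl_mem_joinLabel, joinGraph_ncard_inl]
      split_ifs with he
      · rw [he]
        exact hdeg
      · exact h.deg t he
    · rw [inr_mem_joinLabel hd, joinGraph_ncard_inr]
      have he : t ≠ ρ' := fun e => ht (by rw [e])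
      rw [if_neg he]
      exact h'.deg t he

lemma partialDecomp_unit {V : Type} [Fintype V] (G : SimpleGraph V) (r : ℕ) (S : Set V)
    (hS : S.Subsingleton) :
    PartialDecomp G r S (⊥ : SimpleGraph Unit) () (fun _ => ()) where
  finite := inferInstance
  connected := by
    rw [SimpleGraph.connected_iff_exists_forall_reachable]
    exact ⟨(), fun _ => SimpleGraph.Reachable.refl _⟩
  cut := fun u v h => h.elim
  inj := fun x hx y hy _ => hS hx hy
  deg := fun t ht => (ht rfl).elim

/-- A hierarchy yields a rooted tree whose root lacks exactly one edge. -/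
lemma Hierarchy.exists_partialDecomp {V W : Type} [Fintype V] [Fintype W] [Nonempty W]
    {G : SimpleGraph V} {S : Set V} (h : Hierarchy W G S) :
    ∃ (N : Type) (T : SimpleGraph N) (ρ : N) (L : V → N),
      PartialDecomp G (Fintype.card W) S T ρ L ∧
      DegOk (ρ ∈ L '' S) ((T.neighborSet ρ).ncard + 1) := by
  induction h with
  | single v =>
    refine ⟨Unit, ⊥, (), fun _ => (), partialDecomp_unit G _ _ Set.subsingleton_singleton, ?_⟩
    left
    simp [SimpleGraph.neighborSet]
  | union A B hA hB hd hAB ihA ihB =>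
    obtain ⟨N, T, ρ, L, h, hdeg⟩ := ihA
    obtain ⟨N', T', ρ', L', h', hdeg'⟩ := ihB
    have h0 := partialDecomp_unit G (Fintype.card W) ∅ Set.subsingleton_empty
    -- hang the tree of `B`, and then the tree of `A`, below a new root
    have h1 := h'.join h0 (Set.disjoint_empty B) hdeg' hB.fewTypes.cutRank_le
    have h2 := h.join h1 (by simpa using hd) hdeg hA.fewTypes.cutRank_le
    rw [Set.union_empty] at h2
    refine ⟨_, _, _, _, h2, ?_⟩
    right
    constructor
    · have e : A ∪ B = A ∪ (B ∪ ∅) := by simp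
      rw [e, inr_mem_joinLabel (by simpa using hd), inr_mem_joinLabel (by simp)]
      simp
    · have := h'.finite
      rw [joinGraph_ncard_inr, joinGraph_ncard_inr]
      simp [SimpleGraph.neighborSet]

/-! ### From certified trees to rank decompositions -/

/-- If `uv` is the only edge leaving `A ∋ u`, then deleting it leaves `A` as the component of `u`. -/
lemma reachable_deleteEdges_iff {N : Type} {T : SimpleGraph N} (hT : T.Connected) {u v : N}
    {A : Set N} (hu : u ∈ A) (hv : v ∉ A)
    (hA : ∀ a ∈ A, ∀ b ∉ A, T.Adj a b → s(a, b) = s(u, v)) (w : N) :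
    (T.deleteEdges {s(u, v)}).Reachable w u ↔ w ∈ A := by
  have stay : ∀ a b, (T.deleteEdges {s(u, v)}).Reachable a b → (a ∈ A ↔ b ∈ A) := by
    rintro a b ⟨p⟩
    induction p with
    | nil => rfl
    | @cons a b c hab _ ih =>
      rw [← ih]
      rw [SimpleGraph.deleteEdges_adj] at hab
      constructor
      · intro ha
        by_contra hb
        exact hab.2 (hA a ha b hb hab.1)
      · intro hb
        by_contra ha
        exact hab.2 (Sym2.eq_swap.trans (hA b hb a ha hab.1.symm))
  have split : (T.deleteEdges {s(u, v)}).Reachable w u ∨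
      (T.deleteEdges {s(u, v)}).Reachable w v := by
    obtain ⟨p⟩ := hT.preconnected w u
    suffices H : ∀ a b, T.Walk a b → b = u → (T.deleteEdges {s(u, v)}).Reachable a u ∨
      (T.deleteEdges {s(u, v)}).Reachable a v from H w u p rfl
    intro a b p
    induction p with
    | nil =>
      rintro rfl
      exact Or.inl (SimpleGraph.Reachable.refl _)
    | @cons a b c hab _ ih =>
      intro hc
      by_cases he : s(a, b) = s(u, v)
      · rcases Sym2.eq_iff.1 he with ⟨rfl, rfl⟩ | ⟨rfl, rfl⟩
        · exact Or.inl (SimpleGraph.Reachable.refl _)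
        · exact Or.inr (SimpleGraph.Reachable.refl _)
      · have hab' : (T.deleteEdges {s(u, v)}).Adj a b := by
          rw [SimpleGraph.deleteEdges_adj]
          exact ⟨hab, he⟩
        exact (ih hc).imp hab'.reachable.trans hab'.reachable.trans
  constructor
  · intro h
    exact (stay _ _ h).2 hu
  · intro h
    exact split.resolve_right fun hwv => hv ((stay _ _ hwv).1 h)

/-- Transport of a certified tree along a bijection of its nodes. -/
lemma PartialDecomp.map {V N N' : Type} [Fintype V] {G : SimpleGraph V} {r : ℕ} {S : Set V}
    {T : SimpleGraph N} {ρ : N} {L : V → N} (h : PartialDecomp G r S T ρ L) (e : N' ≃ N) :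
    PartialDecomp G r S (T.comap e) (e.symm ρ) (e.symm ∘ L) ∧
    ∀ t, ((T.comap e).neighborSet t).ncard = (T.neighborSet (e t)).ncard := by
  have hn : ∀ t, ((T.comap e).neighborSet t).ncard = (T.neighborSet (e t)).ncard := by
    intro t
    rw [← Set.ncard_image_of_injective _ e.injective]
    congr 1
    ext x
    rw [e.image_eq_preimage_symm]
    simp
  refine ⟨⟨?_, ?_, ?_, ?_, ?_⟩, hn⟩
  · have := h.finite
    exact Finite.of_equiv N e.symm
  · exact (SimpleGraph.Iso.connected_iff (SimpleGraph.Iso.comap e T)).2 h.connected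
  · intro u v huv
    obtain ⟨A, h1, h2, h3, h4⟩ := h.cut (e u) (e v) huv
    refine ⟨e ⁻¹' A, by simpa using h1, by simpa using h2, ?_, by simpa using h4⟩
    intro a ha b hb hab
    have := h3 (e a) ha (e b) hb hab
    rw [Sym2.eq_iff] at this ⊢
    simpa using this
  · exact e.symm.injective.comp_injOn h.inj
  · intro t ht
    rw [hn]
    have : t ∈ (e.symm ∘ L) '' S ↔ e t ∈ L '' S := by
      simp [Equiv.symm_apply_eq]
    rw [this]
    exact h.deg _ (fun he => ht (by rw [← he, e.symm_apply_apply]))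

lemma PartialDecomp.rankDecompWidthLE {V N : Type} [Fintype V] {G : SimpleGraph V} {r : ℕ}
    {T : SimpleGraph N} {ρ : N} {L : V → N} (h : PartialDecomp G r Set.univ T ρ L)
    (hdeg : DegOk (ρ ∈ L '' Set.univ) (T.neighborSet ρ).ncard) (hN : Nontrivial N) :
    RankDecompWidthLE G r := by
  have := h.finite
  have := Fintype.ofFinite N
  obtain ⟨h', hn⟩ := h.map (Fintype.equivFin N).symm
  have hρ := hn ((Fintype.equivFin N) ρ)
  rw [Equiv.symm_apply_apply] at hρ
  have hd : ∀ t, DegOk (t ∈ (Fintype.equivFin N ∘ L) '' Set.univ)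
      (((T.comap (Fintype.equivFin N).symm)).neighborSet t).ncard := by
    intro t
    by_cases ht : t = Fintype.equivFin N ρ
    · rw [ht, hρ]
      simpa using hdeg
    · exact h'.deg t ht
  generalize (T.comap (Fintype.equivFin N).symm) = T₁ at h' hd
  have hL := h'.inj
  have hcut := h'.cut
  have hc := h'.connected
  simp only [Equiv.symm_symm] at hL hcut
  generalize (Fintype.equivFin N ∘ L) = L₁ at hd hL hcut
  have hdeg_eq : ∀ t, (T₁.neighborSet t).ncard = T₁.degree t := by
    intro t
    exact Nat.card_eq_fintype_card.trans (T₁.card_neighborSet_eq_degree t)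
  simp only [hdeg_eq] at hd
  have hleaf : ∀ t, T₁.degree t = 1 ↔ t ∈ L₁ '' Set.univ := by
    intro t
    rcases hd t with ⟨h1, h2⟩ | ⟨h1, h2⟩
    · simp only [h1, h2]
    · simp only [h1, h2]
      norm_num
  refine ⟨Fintype.card N, T₁, Fintype.one_lt_card, ⟨hc, ?_⟩, ?_, ?_⟩
  · rw [SimpleGraph.isAcyclic_iff_forall_adj_isBridge]
    intro u v huv
    rw [SimpleGraph.isBridge_iff]
    intro hr
    obtain ⟨A, -, h2, h3, -⟩ := hcut u v huv
    by_cases hu : u ∈ A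
    · have hv : v ∉ A := fun hv => h2 ⟨fun _ => hv, fun _ => hu⟩
      exact hv ((reachable_deleteEdges_iff hc hu hv h3 v).1 hr.symm)
    · have hv : v ∈ A := by
        by_contra hv
        exact h2 ⟨fun h => (hu h).elim, fun h => (hv h).elim⟩
      rw [Sym2.eq_swap] at h3 hr
      exact hu ((reachable_deleteEdges_iff hc hv hu h3 u).1 hr)
  · intro t
    exact (hd t).imp And.right And.right
  · refine ⟨Equiv.ofBijective (fun v => ⟨L₁ v, (hleaf _).2 (Set.mem_image_of_mem L₁ (Set.mem_univ v))⟩) ⟨?_, ?_⟩, ?_⟩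
    · intro x y hxy
      exact hL (Set.mem_univ x) (Set.mem_univ y) (congrArg Subtype.val hxy)
    · rintro ⟨t, ht⟩
      obtain ⟨v, -, rfl⟩ := (hleaf t).1 ht
      exact ⟨v, rfl⟩
    · intro u v huv
      obtain ⟨A, -, h2, h3, h4⟩ := hcut u v huv
      show cutRank G {x | (T₁.deleteEdges {s(u, v)}).Reachable (L₁ x) u} ≤ r
      simp only [Set.mem_univ, true_and] at h4
      by_cases hu : u ∈ A
      · have hv : v ∉ A := fun hv => h2 ⟨fun _ => hv, fun _ => hu⟩
        simpa only [reachable_deleteEdges_iff hc hu hv h3] using h4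
      · have hv : v ∈ A := by
          by_contra hv
          exact h2 ⟨fun h => (hu h).elim, fun h => (hv h).elim⟩
        -- `A` is the side of `v`, so the cut at `u` is the complementary one
        have h5 : ∀ a ∈ Aᶜ, ∀ b ∉ Aᶜ, T₁.Adj a b → s(a, b) = s(u, v) := by
          intro a ha b hb hab
          rw [Sym2.eq_swap]
          exact h3 b (not_not.1 hb) a ha hab.symm
        have h6 := reachable_deleteEdges_iff hc (A := Aᶜ) hu (fun h => h hv) h5
        simp only [h6]
        rw [← cutRank_compl] at h4
        exact h4

lemma Hierarchy.rankDecompWidthLE {V W : Type} [Fintype V] [Fintype W] [Nonempty W] [Nontrivial V]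
    {G : SimpleGraph V} (h : Hierarchy W G Set.univ) :
    RankDecompWidthLE G (Fintype.card W) := by
  generalize hS : (Set.univ : Set V) = S at h
  cases h with
  | single v =>
    obtain ⟨x, hx⟩ := exists_ne v
    exact (hx (show x ∈ ({v} : Set V) from hS ▸ Set.mem_univ x)).elim
  | union A B hA hB hd hAB =>
    obtain ⟨N, T, ρ, L, h, hdeg⟩ := hA.exists_partialDecomp
    obtain ⟨N', T', ρ', L', h', hdeg'⟩ := hB.exists_partialDecomp
    have h1 := h.join h' hd hdeg hA.fewTypes.cutRank_le
    have := h'.finite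
    have hr := inr_mem_joinLabel (L := L) (L' := L') hd ρ'
    rw [← hS] at h1 hr
    refine h1.rankDecompWidthLE ?_ ⟨.inl ρ, .inr ρ', by simp⟩
    rw [hr, joinGraph_ncard_inr, if_pos rfl]
    exact hdeg'

/-! ### Lexicographic powers -/

/-- The lexicographic product `H[G]`, on a vertex set identified with `W × V` by `e`. -/
def lexGraph {U V W : Type} (H : SimpleGraph W) (G : SimpleGraph V) (e : U ≃ W × V) :
    SimpleGraph U where
  Adj x y := H.Adj (e x).1 (e y).1 ∨ ((e x).1 = (e y).1 ∧ G.Adj (e x).2 (e y).2)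
  symm := ⟨fun _ _ h => h.imp (fun h => h.symm) (fun h => ⟨h.1.symm, h.2.symm⟩)⟩
  loopless := ⟨fun _ h => h.elim (H.loopless.irrefl _) (fun h => G.loopless.irrefl _ h.2)⟩

/-- Placing `G` as a module into `H[G]` does not create new neighbourhood types. -/
lemma FewTypes.lex {U V W : Type} {H : SimpleGraph W} {G : SimpleGraph V} (e : U ≃ W × V)
    {S : Set V} (h : FewTypes W G S) (w : W) :
    FewTypes W (lexGraph H G e) {x | (e x).1 = w ∧ (e x).2 ∈ S} := by
  obtain ⟨f, hf⟩ := h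
  refine ⟨fun x => f (e x).2, ?_⟩
  rintro x ⟨hx, hxS⟩ x' ⟨hx', hxS'⟩ hxx y hy
  show (_ ∨ _) ↔ (_ ∨ _)
  rw [hx, hx']
  refine or_congr Iff.rfl (and_congr_right fun hw => ?_)
  exact hf _ hxS _ hxS' hxx _ fun hyS => hy ⟨hw.symm, hyS⟩

lemma Hierarchy.lex_copy {U V W : Type} {H : SimpleGraph W} {G : SimpleGraph V} (e : U ≃ W × V)
    {S : Set V} (h : Hierarchy W G S) (w : W) :
    Hierarchy W (lexGraph H G e) {x | (e x).1 = w ∧ (e x).2 ∈ S} := by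
  induction h with
  | single v =>
    have : {x | (e x).1 = w ∧ (e x).2 ∈ ({v} : Set V)} = {e.symm (w, v)} := by
      ext x
      simp [Equiv.eq_symm_apply, Prod.ext_iff]
    rw [this]
    exact .single _
  | union A B _ _ hd hAB ihA ihB =>
    have hl := hAB.lex (H := H) e w
    have : {x | (e x).1 = w ∧ (e x).2 ∈ A ∪ B} =
        {x | (e x).1 = w ∧ (e x).2 ∈ A} ∪ {x | (e x).1 = w ∧ (e x).2 ∈ B} := by
      ext x
      simp [and_or_left]
    rw [this] at hl ⊢
    refine .union _ _ ihA ihB ?_ hl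
    rw [Set.disjoint_left]
    exact fun x hx hx' => Set.disjoint_left.1 hd hx.2 hx'.2

lemma Hierarchy.lex {U V W : Type} [Fintype W] [Nonempty W] {H : SimpleGraph W}
    {G : SimpleGraph V} (e : U ≃ W × V) (h : Hierarchy W G Set.univ) :
    Hierarchy W (lexGraph H G e) Set.univ := by
  suffices key : ∀ s : Finset W, s.Nonempty → Hierarchy W (lexGraph H G e) {x | (e x).1 ∈ s} by
    simpa using key Finset.univ Finset.univ_nonempty
  intro s hs
  have copy := fun w => h.lex_copy (H := H) e w
  simp only [Set.mem_univ, and_true] at copy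
  induction hs using Finset.Nonempty.cons_induction with
  | singleton w => simpa using copy w
  | cons w s hw hs ih =>
    have : {x | (e x).1 ∈ Finset.cons w s hw} = {x | (e x).1 = w} ∪ {x | (e x).1 ∈ s} := by
      ext x
      simp
    have hf : FewTypes W (lexGraph H G e) {x | (e x).1 ∈ Finset.cons w s hw} := by
      refine ⟨fun x => (e x).1, ?_⟩
      intro x hx x' hx' hxx y hy
      have hne : (e x').1 ≠ (e y).1 := fun he => hy (by simpa only [Set.mem_ofPred_eq, ← he] using hx')
      simp only at hxx
      simp [lexGraph, hxx, hne]
    rw [this] at hf ⊢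
    refine .union _ _ (copy w) ih ?_ hf
    rw [Set.disjoint_left]
    rintro x rfl hx
    exact hw hx

/-- The `m`-th lexicographic power of `H` has a hierarchy with `|H|` types and, in each colouring
with at most `m` colours, a monochromatic induced copy of `H`. -/
lemma exists_lexPower {h : ℕ} (h2 : 2 ≤ h) (H : SimpleGraph (Fin h)) (m : ℕ) :
    ∃ (n : ℕ) (G : SimpleGraph (Fin n)), Hierarchy (Fin h) G Set.univ ∧ (1 ≤ m → 2 ≤ n) ∧
      ∀ (c : Fin n → ℕ) (C : Finset ℕ), (∀ x, c x ∈ C) → C.card ≤ m →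
        ∃ (i : ℕ) (g : Fin h ↪ Fin n), (∀ u v, H.Adj u v ↔ G.Adj (g u) (g v)) ∧
          ∀ u, c (g u) = i := by
  have : Nonempty (Fin h) := ⟨⟨0, by omega⟩⟩
  induction m with
  | zero =>
    refine ⟨1, ⊥, ?_, by omega, ?_⟩
    · have : (Set.univ : Set (Fin 1)) = {0} := by
        ext x
        simp [Subsingleton.elim x 0]
      rw [this]
      exact .single 0
    · intro c C hc hC
      have := hc 0
      simp [Finset.card_eq_zero.1 (Nat.le_zero.1 hC)] at this
  | succ m ih =>
    obtain ⟨n, G, hG, -, hcol⟩ := ih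
    have hn : 1 ≤ n := by
      obtain ⟨x, -⟩ := hG.nonempty
      exact Nat.one_le_iff_ne_zero.2 fun h => (h ▸ x).elim0
    obtain ⟨e⟩ : Nonempty (Fin (h * n) ≃ Fin h × Fin n) := ⟨finProdFinEquiv.symm⟩
    refine ⟨h * n, lexGraph H G e, hG.lex e, fun _ => by nlinarith, ?_⟩
    intro c C hc hC
    let i := c (e.symm (Classical.arbitrary _, ⟨0, hn⟩))
    by_cases hi : ∀ w, ∃ v, c (e.symm (w, v)) = i
    · choose s hs using hi
      refine ⟨i, ⟨fun w => e.symm (w, s w), ?_⟩, ?_, hs⟩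
      · intro w w' hw
        exact congrArg Prod.fst (e.symm.injective hw)
      · intro u v
        show H.Adj u v ↔ (H.Adj (e (e.symm (u, s u))).1 (e (e.symm (v, s v))).1 ∨
          ((e (e.symm (u, s u))).1 = (e (e.symm (v, s v))).1 ∧
            G.Adj (e (e.symm (u, s u))).2 (e (e.symm (v, s v))).2))
        simp only [Equiv.apply_symm_apply]
        constructor
        · exact Or.inl
        · rintro (h | ⟨h, h'⟩)
          · exact h
          · subst h
            exact (G.loopless.irrefl _ h').elim
    · push Not at hi
      obtain ⟨w, hw⟩ := hi
      have hiC : i ∈ C := hc _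
      obtain ⟨j, g, hg, hj⟩ := hcol (fun v => c (e.symm (w, v))) (C.erase i)
        (fun v => Finset.mem_erase.2 ⟨hw v, hc _⟩) (by rw [Finset.card_erase_of_mem hiC]; omega)
      refine ⟨j, ⟨fun u => e.symm (w, g u), ?_⟩, ?_, hj⟩
      · intro u u' hu
        exact g.injective (congrArg Prod.snd (e.symm.injective hu))
      · intro u v
        show H.Adj u v ↔ (H.Adj (e (e.symm (w, g u))).1 (e (e.symm (w, g v))).1 ∨
          ((e (e.symm (w, g u))).1 = (e (e.symm (w, g v))).1 ∧
            G.Adj (e (e.symm (w, g u))).2 (e (e.symm (w, g v))).2))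
        simp [hg u v]

/-- For every class `F` of finite graphs (given as a predicate on graphs on `Fin n`) that is
closed under isomorphism, hereditary and proper, there is an `r` such that for every `m ≥ 1`
some graph `G` of rankwidth at most `r` satisfies: in every partition of `V(G)` into `m` parts,
some part induces a subgraph that is not in `F`. -/
theorem exists_bounded_rankw_no_cover (F : ∀ n : ℕ, SimpleGraph (Fin n) → Prop)
    (hIso : ∀ (n m : ℕ) (G : SimpleGraph (Fin n)) (H : SimpleGraph (Fin m)),
      Nonempty (G ≃g H) → F n G → F m H)
    (hHered : ∀ (n : ℕ) (G : SimpleGraph (Fin n)), F n G →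
      ∀ (m : ℕ) (H : SimpleGraph (Fin m)), IsInducedIn H G → F m H)
    (hProper : ∃ (n : ℕ) (G : SimpleGraph (Fin n)), ¬ F n G) :
    ∃ r : ℕ, ∀ m : ℕ, 1 ≤ m → ∃ (n : ℕ) (G : SimpleGraph (Fin n)), rankw G ≤ r ∧
      ∀ c : Fin n → Fin m, ∃ i : Fin m,
        ¬ ∃ (k : ℕ) (H : SimpleGraph (Fin k)) (e : Fin k ≃ {x : Fin n // c x = i}),
            (∀ u v : Fin k, H.Adj u v ↔ G.Adj (e u).1 (e v).1) ∧ F k H := by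
  obtain ⟨n₀, H₀, hH₀⟩ := hProper
  -- two isolated vertices are added, since rank decompositions need at least two vertices
  let H : SimpleGraph (Fin (n₀ + 2)) := H₀.map (Fin.castAddEmb 2)
  have hH : ¬ F _ H := fun hF => hH₀ (hHered _ _ hF _ _
    ⟨Fin.castAddEmb 2, fun u v => SimpleGraph.map_adj_apply.symm⟩)
  refine ⟨n₀ + 2, fun m hm => ?_⟩
  obtain ⟨n, G, hG, hn, hcol⟩ := exists_lexPower (by omega) H m
  refine ⟨n, G, ?_, ?_⟩
  · have : Nontrivial (Fin n) := Fin.nontrivial_iff_two_le.2 (hn hm)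
    apply Nat.sInf_le
    simpa using hG.rankDecompWidthLE
  · intro c
    obtain ⟨i, g, hg, hi⟩ := hcol (fun x => (c x : ℕ)) (Finset.range m) (by simp) (by simp)
    refine ⟨c (g 0), ?_⟩
    rintro ⟨k, H', e, he, hF⟩
    have hc : ∀ u, c (g u) = c (g 0) := fun u => Fin.ext ((hi u).trans (hi 0).symm)
    apply hH
    refine hHered _ _ hF _ _ ⟨⟨fun u => e.symm ⟨g u, hc u⟩, ?_⟩, ?_⟩
    · intro u v huv
      exact g.injective (congrArg Subtype.val (e.symm.injective huv))
    · intro u v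
      show H.Adj u v ↔ H'.Adj (e.symm ⟨g u, hc u⟩) (e.symm ⟨g v, hc v⟩)
      simp [he, hg u v]
end

section
/- For all integers t ≥ 1 and p ≥ 0 there exists an integer N such that every finite simple graph G that contains no K_{t,t} as a subgraph and, for every q with 0 ≤ q ≤ p, contains no induced subgraph isomorphic to the q-subdivision of K_{4t}, contains no ≤p-subdivision of K_N as a subgraph. -/
/-! The proof finds, inside a large `≤p`-subdivision of a clique, a large piece on which `G` is
completely regular, and shows that this piece contains an induced `q`-subdivision of `K_{4t}`.

Order the branch vertices. Colour each 4-set of branch vertices by the length of the path joining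
its first two members and by all adjacencies of `G` among the vertices on the paths it spans. By
Ramsey's theorem for 4-sets (`ramsey_tuple`) one may pass to a set of branch vertices on which all
paths have the same number `q` of internal vertices and adjacency in `G` depends only on the
positions on the paths and the relative order of the indices involved (`HomSystem`).

Attach to a branch vertex its own index, and to an internal vertex the two indices of its path.
If two adjacent vertices have index sets neither of which contains the other, choose an index
private to each and let both vary over blocks of `t` consecutive indices, the blocks being placed
according to the order type. Homogeneity makes the resulting `2t` vertices span a `K_{t,t}`
(`HomSystem.not_adj`); four blocks of size `t` suffice. Hence in a `K_{t,t}`-free graph two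
vertices can only be adjacent if they lie on a common path.

The chords inside a path follow the same pattern on every path. A shortest route from end to end
in this pattern, taken on every path simultaneously, uses `q' ≤ q` internal vertices and has no
chords, so it yields an induced `q'`-subdivision of the clique (`HomSystem.exists_induced`). -/

open scoped Classical

/-- Vertex type of a subdivision of a graph `H` on `Fin n` where the edge `(i,j)` (with `i < j`)
is replaced by a path with `ℓ (i,j)` internal vertices: the branch vertices `Fin n` together
with, for each edge, its internal path vertices. -/
def SubdivVert (n : ℕ) (H : SimpleGraph (Fin n)) (ℓ : Fin n × Fin n → ℕ) : Type :=
  Fin n ⊕ (Σ e : {p : Fin n × Fin n // p.1 < p.2 ∧ H.Adj p.1 p.2}, Fin (ℓ e.1))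

/-- The subdivision of `H` in which each edge `(i,j)` with `i < j` is replaced by a path with
`ℓ (i,j)` internal vertices. -/
def subdivision (n : ℕ) (H : SimpleGraph (Fin n)) (ℓ : Fin n × Fin n → ℕ) :
    SimpleGraph (SubdivVert n H ℓ) :=
  SimpleGraph.fromRel (fun x y =>
    match x, y with
    | Sum.inl i, Sum.inl j => H.Adj i j ∧ i < j ∧ ℓ (i, j) = 0
    | Sum.inl i, Sum.inr ⟨e, k⟩ =>
        (e.1.1 = i ∧ (k : ℕ) = 0) ∨ (e.1.2 = i ∧ (k : ℕ) + 1 = ℓ e.1)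
    | Sum.inr ⟨e, k⟩, Sum.inr ⟨e', k'⟩ => e.1 = e'.1 ∧ (k : ℕ) + 1 = (k' : ℕ)
    | Sum.inr _, Sum.inl _ => False)

/-- `G` contains a copy of `H` as a (not necessarily induced) subgraph. -/
def ContainsSub {V W : Type} (G : SimpleGraph V) (H : SimpleGraph W) : Prop :=
  ∃ f : W ↪ V, ∀ u v : W, H.Adj u v → G.Adj (f u) (f v)

/-- `G` contains a copy of `H` as an induced subgraph. -/
def ContainsInduced {V W : Type} (G : SimpleGraph V) (H : SimpleGraph W) : Prop :=
  ∃ f : W ↪ V, ∀ u v : W, H.Adj u v ↔ G.Adj (f u) (f v)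

/-! ### Ramsey's theorem for `k`-sets -/

/-- Finite Ramsey theorem for colourings of `k`-element sets, on finite subsets of linear orders. -/
lemma ramsey_finset (C : Type) [Finite C] (k : ℕ) : ∀ m : ℕ, ∃ N : ℕ,
    ∀ (α : Type) [LinearOrder α] (c : Finset α → C) (S : Finset α), N ≤ S.card →
      ∃ T ⊆ S, m ≤ T.card ∧ ∀ A ⊆ T, ∀ B ⊆ T, A.card = k → B.card = k → c A = c B := by
  induction k with
  | zero =>
    intro m
    refine ⟨m, fun α _ c S hS => ⟨S, subset_rfl, hS, fun A _ B _ hA hB => ?_⟩⟩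
    rw [Finset.card_eq_zero.1 hA, Finset.card_eq_zero.1 hB]
  | succ k ih =>
    -- Min-homogeneous sets: the colour of a `(k+1)`-set depends only on its least element.
    have key : ∀ n : ℕ, ∃ N : ℕ,
        ∀ (α : Type) [LinearOrder α] (c : Finset α → C) (S : Finset α), N ≤ S.card →
          ∃ T ⊆ S, n ≤ T.card ∧ ∃ d : α → C, ∀ x ∈ T, ∀ A ⊆ T, A.card = k →
            (∀ y ∈ A, x < y) → c (insert x A) = d x := by
      intro n
      induction n with
      | zero =>
        exact ⟨1, fun α _ c S hS => ⟨∅, by simp, by simp, fun _ => c ∅, by simp⟩⟩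
      | succ n ihn =>
        obtain ⟨N₁, h₁⟩ := ihn
        obtain ⟨N₂, h₂⟩ := ih (max N₁ k)
        refine ⟨N₂ + 1, fun α _ c S hS => ?_⟩
        have hne : S.Nonempty := Finset.card_pos.1 (by omega)
        set x := S.min' hne with hx
        have hxS : x ∈ S := S.min'_mem hne
        obtain ⟨S', hS', hcard, hhom⟩ := h₂ α (fun A => c (insert x A)) (S.erase x)
          (by rw [Finset.card_erase_of_mem hxS]; omega)
        obtain ⟨T, hT, hTc, d, hd⟩ := h₁ α c S' (le_trans (le_max_left _ _) hcard)
        obtain ⟨A₀, hA₀, hA₀c⟩ := Finset.exists_subset_card_eq (le_trans (le_max_right _ _) hcard)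
        have hlt : ∀ y ∈ T, x < y := fun y hy => by
          have := hS' (hT hy)
          rw [Finset.mem_erase] at this
          exact lt_of_le_of_ne (S.min'_le y this.2) (Ne.symm this.1)
        have hxT : x ∉ T := fun h => lt_irrefl _ (hlt x h)
        refine ⟨insert x T, ?_, ?_, fun z => if z = x then c (insert x A₀) else d z, ?_⟩
        · intro y hy
          rcases Finset.mem_insert.1 hy with rfl | hy
          · exact hxS
          · exact Finset.mem_of_mem_erase (hS' (hT hy))
        · rw [Finset.card_insert_of_notMem hxT]; omega
        · intro z hz A hA hAc hzA
          have hxA : x ∉ A := fun h => by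
            have h1 := hzA x h
            rcases Finset.mem_insert.1 hz with rfl | hz
            · exact lt_irrefl _ h1
            · exact lt_asymm h1 (hlt z hz)
          have hAT : A ⊆ T := (Finset.subset_insert_iff_of_notMem hxA).1 hA
          by_cases hzx : z = x
          · simp only [hzx, if_true]
            exact hhom A (hAT.trans hT) A₀ hA₀ hAc hA₀c
          · simp only [hzx, if_false]
            exact hd z ((Finset.mem_insert.1 hz).resolve_left hzx) A hAT hAc hzA
    intro m
    have := Fintype.ofFinite C
    obtain ⟨N, hN⟩ := key (Fintype.card C * m + 1)
    refine ⟨N, fun α _ c S hS => ?_⟩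
    obtain ⟨T, hT, hTc, d, hd⟩ := hN α c S hS
    obtain ⟨col, -, hcol⟩ := Finset.exists_lt_card_fiber_of_mul_lt_card_of_maps_to
      (s := T) (t := (Finset.univ : Finset C)) (f := d) (n := m) (by simp)
      (by rw [Finset.card_univ]; omega)
    have hA : ∀ A ⊆ T.filter (fun x => d x = col), A.card = k + 1 → c A = col := by
      intro A hA hAc
      have hne : A.Nonempty := Finset.card_pos.1 (by omega)
      have hm := A.min'_mem hne
      have h1 := Finset.mem_filter.1 (hA hm)
      rw [← Finset.insert_erase hm, hd _ h1.1 (A.erase (A.min' hne)), h1.2]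
      · intro y hy
        exact (Finset.mem_filter.1 (hA (Finset.mem_of_mem_erase hy))).1
      · rw [Finset.card_erase_of_mem hm]; omega
      · intro y hy
        rw [Finset.mem_erase] at hy
        exact lt_of_le_of_ne (A.min'_le y hy.2) (Ne.symm hy.1)
    exact ⟨_, (Finset.filter_subset _ _).trans hT, hcol.le, fun A hAs B hBs hAc hBc =>
      (hA A hAs hAc).trans (hA B hBs hBc).symm⟩

/-- Ramsey's theorem for increasing `k`-tuples: some increasing `w` makes the colour of
`w ∘ e` the same for all increasing `e`. -/
lemma ramsey_tuple (C : Type) [Finite C] (k M : ℕ) : ∃ N : ℕ, ∀ c : (Fin k → Fin N) → C,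
    ∃ w : Fin M → Fin N, StrictMono w ∧
      ∀ e e' : Fin k → Fin M, StrictMono e → StrictMono e' → c (w ∘ e) = c (w ∘ e') := by
  obtain ⟨N, hN⟩ := ramsey_finset (Option C) k M
  refine ⟨N, fun c => ?_⟩
  obtain ⟨T, -, hT, hhom⟩ := hN (Fin N)
    (fun A => if h : A.card = k then some (c (A.orderEmbOfFin h)) else none) Finset.univ (by simp)
  obtain ⟨T', hT', hT'c⟩ := Finset.exists_subset_card_eq hT
  refine ⟨T'.orderEmbOfFin hT'c, (T'.orderEmbOfFin hT'c).strictMono, fun e e' he he' => ?_⟩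
  set w := T'.orderEmbOfFin hT'c with hw
  have hmem : ∀ i, w i ∈ T := fun i => hT' (T'.orderEmbOfFin_mem hT'c i)
  have aux : ∀ e : Fin k → Fin M, StrictMono e →
      ∃ A ⊆ T, ∃ h : A.card = k, A.orderEmbOfFin h = w ∘ e := by
    intro e he
    have hm : StrictMono (w ∘ e) := w.strictMono.comp he
    have hc : (Finset.univ.image (w ∘ e)).card = k := by
      rw [Finset.card_image_of_injective _ hm.injective]; simp
    refine ⟨Finset.univ.image (w ∘ e), ?_, hc, ?_⟩
    · intro y hy
      obtain ⟨i, -, rfl⟩ := Finset.mem_image.1 hy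
      exact hmem _
    · exact (Finset.orderEmbOfFin_unique hc (fun x => Finset.mem_image_of_mem _ (Finset.mem_univ x))
        hm).symm
  obtain ⟨A, hA, hAc, hAe⟩ := aux e he
  obtain ⟨B, hB, hBc, hBe⟩ := aux e' he'
  have := hhom A hA B hB hAc hBc
  simpa [hAc, hBc, hAe, hBe] using this

/-! ### Induced paths -/

/-- A shortest walk, read as an induced path `g 0, …, g d`. -/
lemma exists_induced_path {W : Type} (H : SimpleGraph W) {u v : W} (h : H.Reachable u v) :
    ∃ (d : ℕ) (g : ℕ → W), g 0 = u ∧ g d = v ∧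
      (∀ a ≤ d, ∀ b ≤ d, g a = g b → a = b) ∧
      (∀ a ≤ d, ∀ b ≤ d, H.Adj (g a) (g b) ↔ (a + 1 = b ∨ b + 1 = a)) := by
  obtain ⟨P, hP⟩ := h.exists_walk_length_eq_dist
  have hd : ∀ a ≤ P.length, ∀ b ≤ P.length, a ≤ b →
      ∀ Q : H.Walk (P.getVert a) (P.getVert b), b ≤ a + Q.length := by
    intro a ha b hb hab Q
    have := SimpleGraph.dist_le (((P.take a).append Q).append (P.drop b))
    simp only [SimpleGraph.Walk.length_append, SimpleGraph.Walk.take_length,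
      SimpleGraph.Walk.drop_length] at this
    omega
  have hinj : ∀ a ≤ P.length, ∀ b ≤ P.length, a ≤ b → P.getVert a = P.getVert b → a = b := by
    intro a ha b hb hab h
    have := hd a ha b hb hab (SimpleGraph.Walk.nil.copy rfl h)
    simp at this
    omega
  have hadj : ∀ a ≤ P.length, ∀ b ≤ P.length, a ≤ b →
      H.Adj (P.getVert a) (P.getVert b) → a + 1 = b := by
    intro a ha b hb hab h
    have := hd a ha b hb hab h.toWalk
    simp at this
    rcases eq_or_lt_of_le hab with rfl | h'
    · exact absurd h (H.loopless.irrefl _)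
    · omega
  refine ⟨P.length, P.getVert, by simp, by simp, ?_, ?_⟩
  · intro a ha b hb h
    rcases le_total a b with hab | hab
    · exact hinj a ha b hb hab h
    · exact (hinj b hb a ha hab h.symm).symm
  · intro a ha b hb
    constructor
    · intro h
      rcases le_total a b with hab | hab
      · exact Or.inl (hadj a ha b hb hab h)
      · exact Or.inr (hadj b hb a ha hab h.symm)
    · rintro (rfl | rfl)
      · exact P.adj_getVert_succ (by omega)
      · exact (P.adj_getVert_succ (by omega)).symm

/-! ### Homogeneous systems of paths -/

/-- The label `(i, j, a)` is a canonical name for a vertex of the `q`-subdivision of a clique: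
`(i, i, 0)` is the branch vertex `i`, and `(i, j, a)` with `i < j` and `1 ≤ a ≤ q` is the
`a`-th internal vertex on the path from `i` to `j`. -/
def ValidLabel (q i j a : ℕ) : Prop := (i = j ∧ a = 0) ∨ (i < j ∧ 1 ≤ a ∧ a ≤ q)

lemma ValidLabel.le {q i j a : ℕ} (h : ValidLabel q i j a) : i ≤ j ∧ a ≤ q := by
  unfold ValidLabel at h; omega

/-- A family `X i j a` of vertices of `G`, for `i, j < M`, tracing the `q`-subdivision of
a clique, whose adjacencies in `G` depend only on the order type of the indices. -/
structure HomSystem {V : Type} (G : SimpleGraph V) (M q : ℕ) (X : ℕ → ℕ → ℕ → V) : Prop where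
  inj : ∀ i j a k l b, ValidLabel q i j a → ValidLabel q k l b → j < M → l < M →
    X i j a = X k l b → i = k ∧ j = l ∧ a = b
  hom : ∀ e e' : Fin 4 → ℕ, StrictMono e → StrictMono e' → e 3 < M → e' 3 < M →
    ∀ r r' a s s' b, a ≤ q + 1 → b ≤ q + 1 → (G.Adj (X (e r) (e r') a) (X (e s) (e s') b) ↔
      G.Adj (X (e' r) (e' r') a) (X (e' s) (e' s') b))
  adj : ∀ i j a, i < j → j < M → a ≤ q → G.Adj (X i j a) (X i j (a + 1))
  first : ∀ i j, X i j 0 = X i i 0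
  last : ∀ i j, i < j → j < M → X i j (q + 1) = X j j 0

/-- Two vertices whose index pairs are incomparable under inclusion are non-adjacent: otherwise
letting the index `x` private to the first and the index `y` private to the second each run
through a block of `t` values produces a `K_{t,t}`. -/
lemma HomSystem.not_adj {V : Type} {G : SimpleGraph V} {M q t : ℕ} {X : ℕ → ℕ → ℕ → V}
    (hX : HomSystem G M q X) (ht : 1 ≤ t) (hM : 4 * t ≤ M)
    (hK : ¬ ContainsSub G (completeBipartiteGraph (Fin t) (Fin t)))
    {i j a k l b x y : ℕ} (h₁ : ValidLabel q i j a) (h₂ : ValidLabel q k l b)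
    (hj : j < M) (hl : l < M)
    (hx : x = i ∨ x = j) (hx' : x ≠ k ∧ x ≠ l) (hy : y = k ∨ y = l) (hy' : y ≠ i ∧ y ≠ j) :
    ¬ G.Adj (X i j a) (X k l b) := by
  intro hadj
  apply hK
  have hi := h₁.le
  have hk := h₂.le
  obtain ⟨A, hsub, hAM, hAc⟩ := Finset.exists_subsuperset_card_eq
    (s := ({i, j, k, l} : Finset ℕ)) (t := Finset.range M) (n := 4)
    (by
      intro z hz
      simp only [Finset.mem_insert, Finset.mem_singleton] at hz
      rw [Finset.mem_range]; omega)
    Finset.card_le_four (by rw [Finset.card_range]; omega)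
  set f := A.orderEmbOfFin hAc with hf
  have hr : ∀ z ∈ A, ∃ r, f r = z := by
    intro z hz
    have : z ∈ Set.range f := by rw [Finset.range_orderEmbOfFin]; exact hz
    exact this
  obtain ⟨ri, hri⟩ := hr i (hsub (by simp))
  obtain ⟨rj, hrj⟩ := hr j (hsub (by simp))
  obtain ⟨rk, hrk⟩ := hr k (hsub (by simp))
  obtain ⟨rl, hrl⟩ := hr l (hsub (by simp))
  obtain ⟨rx, hrx⟩ : ∃ r, f r = x := by
    rcases hx with rfl | rfl
    exacts [⟨ri, hri⟩, ⟨rj, hrj⟩]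
  obtain ⟨ry, hry⟩ : ∃ r, f r = y := by
    rcases hy with rfl | rfl
    exacts [⟨rk, hrk⟩, ⟨rl, hrl⟩]
  have hf3 : f 3 < M := Finset.mem_range.1 (hAM (A.orderEmbOfFin_mem hAc 3))
  have hxk : rx ≠ rk := by rintro rfl; exact hx'.1 (hrx.symm.trans hrk)
  have hxl : rx ≠ rl := by rintro rfl; exact hx'.2 (hrx.symm.trans hrl)
  have hyi : ry ≠ ri := by rintro rfl; exact hy'.1 (hry.symm.trans hri)
  have hyj : ry ≠ rj := by rintro rfl; exact hy'.2 (hry.symm.trans hrj)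
  have hxij : rx = ri ∨ rx = rj := by
    rcases hx with rfl | rfl
    · exact Or.inl (f.injective (hrx.trans hri.symm))
    · exact Or.inr (f.injective (hrx.trans hrj.symm))
  have hykl : ry = rk ∨ ry = rl := by
    rcases hy with rfl | rfl
    · exact Or.inl (f.injective (hry.trans hrk.symm))
    · exact Or.inr (f.injective (hry.trans hrl.symm))
  -- The tuple with rank `z` placed in the block `[z t, (z + 1) t)`, moving only `rx` and `ry`.
  let e : Fin t → Fin t → Fin 4 → ℕ := fun s s' z =>
    (z : ℕ) * t + if z = rx then (s : ℕ) else if z = ry then (s' : ℕ) else 0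
  have hoff : ∀ s s' : Fin t, ∀ z,
      (if z = rx then (s : ℕ) else if z = ry then (s' : ℕ) else 0) < t := by
    intro s s' z
    split_ifs
    exacts [s.2, s'.2, ht]
  have hemono : ∀ s s', StrictMono (e s s') := by
    intro s s' z z' hz
    have h1 := hoff s s' z
    have h2 : ((z : ℕ) + 1) * t ≤ (z' : ℕ) * t := Nat.mul_le_mul_right t hz
    rw [Nat.add_mul, one_mul] at h2
    simp only [e]
    omega
  have hebd : ∀ s s' z, e s s' z < M := by
    intro s s' z
    have h1 := hoff s s' z
    have h2 : ((z : ℕ) + 1) * t ≤ 4 * t := Nat.mul_le_mul_right t z.2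
    rw [Nat.add_mul, one_mul] at h2
    simp only [e]
    omega
  let z₀ : Fin t := ⟨0, ht⟩
  have hvalid : ∀ (r r' : Fin 4) (c : ℕ), ValidLabel q (f r) (f r') c → ∀ s s',
      ValidLabel q (e s s' r) (e s s' r') c := by
    intro r r' c h s s'
    rcases h with ⟨h, hc⟩ | ⟨h, hc⟩
    · exact Or.inl ⟨congrArg _ (f.injective h), hc⟩
    · exact Or.inr ⟨hemono s s' (f.lt_iff_lt.1 h), hc⟩
  have hv₁ := hvalid ri rj a (by rw [hri, hrj]; exact h₁)
  have hv₂ := hvalid rk rl b (by rw [hrk, hrl]; exact h₂)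
  have e_left : ∀ s s' z, z ≠ ry → e s s' z = e s z₀ z := by
    intro s s' z hz
    simp only [e, if_neg hz]
  have e_right : ∀ s s' z, z ≠ rx → e s s' z = e z₀ s' z := by
    intro s s' z hz
    simp only [e, if_neg hz]
  have hrxy : rx ≠ ry := by
    rcases hykl with h | h
    · rw [h]; exact hxk
    · rw [h]; exact hxl
  have hedge : ∀ s s', G.Adj (X (e s z₀ ri) (e s z₀ rj) a) (X (e z₀ s' rk) (e z₀ s' rl) b) := by
    intro s s'
    have := (hX.hom f (e s s') f.strictMono (hemono s s') hf3 (hebd _ _ _) ri rj a rk rl b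
      (by omega) (by omega)).1 (by rw [hri, hrj, hrk, hrl]; exact hadj)
    rwa [e_left s s' ri hyi.symm, e_left s s' rj hyj.symm, e_right s s' rk hxk.symm,
      e_right s s' rl hxl.symm] at this
  let F : Fin t ⊕ Fin t → V := Sum.elim (fun s => X (e s z₀ ri) (e s z₀ rj) a)
    (fun s' => X (e z₀ s' rk) (e z₀ s' rl) b)
  have hF : Function.Injective F := by
    rintro (s | s) (s' | s') h
    · have := hX.inj _ _ _ _ _ _ (hv₁ s z₀) (hv₁ s' z₀) (hebd _ _ _) (hebd _ _ _) h
      have h3 : e s z₀ rx = e s' z₀ rx := by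
        rcases hxij with h | h
        · rw [h]; exact this.1
        · rw [h]; exact this.2.1
      simp only [e, if_true] at h3
      congr 1
      exact Fin.ext (by omega)
    · exact absurd h (hedge s s').ne
    · exact absurd h (hedge s' s).ne.symm
    · have := hX.inj _ _ _ _ _ _ (hv₂ z₀ s) (hv₂ z₀ s') (hebd _ _ _) (hebd _ _ _) h
      have h3 : e z₀ s ry = e z₀ s' ry := by
        rcases hykl with h | h
        · rw [h]; exact this.1
        · rw [h]; exact this.2.1
      simp only [e, if_true, if_neg hrxy.symm] at h3
      congr 1
      exact Fin.ext (by omega)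
  refine ⟨⟨F, hF⟩, ?_⟩
  rintro (s | s) (s' | s') h
  · simp at h
  · exact hedge s s'
  · exact (hedge s' s).symm
  · simp at h

/-! ### Adjacency in subdivisions of cliques -/

lemma subdivision_adj_inl_inl {n : ℕ} {ℓ : Fin n × Fin n → ℕ} {i j : Fin n} (hij : i < j) :
    (subdivision n ⊤ ℓ).Adj (Sum.inl i) (Sum.inl j) ↔ ℓ (i, j) = 0 := by
  constructor
  · rintro ⟨-, ⟨-, -, h⟩ | ⟨-, h, -⟩⟩
    · exact h
    · exact absurd h hij.not_gt
  · intro h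
    exact ⟨fun heq => hij.ne (Sum.inl.inj heq), Or.inl ⟨hij.ne, hij, h⟩⟩

lemma subdivision_adj_inl_inr {n : ℕ} {H : SimpleGraph (Fin n)} {ℓ : Fin n × Fin n → ℕ} {i : Fin n}
    {e : {p : Fin n × Fin n // p.1 < p.2 ∧ H.Adj p.1 p.2}} {k : Fin (ℓ e.1)} :
    (subdivision n H ℓ).Adj (Sum.inl i) (Sum.inr ⟨e, k⟩) ↔
      (e.1.1 = i ∧ (k : ℕ) = 0) ∨ (e.1.2 = i ∧ (k : ℕ) + 1 = ℓ e.1) := by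
  constructor
  · rintro ⟨-, h | h⟩
    · exact h
    · exact h.elim
  · intro h
    exact ⟨Sum.inl_ne_inr, Or.inl h⟩

lemma subdivision_adj_inr_inr {n : ℕ} {H : SimpleGraph (Fin n)} {ℓ : Fin n × Fin n → ℕ}
    {e e' : {p : Fin n × Fin n // p.1 < p.2 ∧ H.Adj p.1 p.2}} {k : Fin (ℓ e.1)}
    {k' : Fin (ℓ e'.1)} :
    (subdivision n H ℓ).Adj (Sum.inr ⟨e, k⟩) (Sum.inr ⟨e', k'⟩) ↔
      e.1 = e'.1 ∧ ((k : ℕ) + 1 = k' ∨ (k' : ℕ) + 1 = k) := by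
  constructor
  · rintro ⟨-, ⟨h, h'⟩ | ⟨h, h'⟩⟩
    · exact ⟨h, Or.inl h'⟩
    · exact ⟨h.symm, Or.inr h'⟩
  · rintro ⟨h, h'⟩
    refine ⟨?_, h'.imp (fun h' => ⟨h, h'⟩) (fun h' => ⟨h.symm, h'⟩)⟩
    intro heq
    have h2 := Sum.inr.inj heq
    obtain rfl : e = e' := Subtype.ext h
    have := eq_of_heq (Sigma.mk.inj h2).2
    subst this
    omega

/-- Replacing every path of a homogeneous system by the same induced sub-path of it gives an
induced subdivision of a clique. The pattern `H` of chords common to all paths is read off from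
the path between the indices `0` and `1`. -/
lemma HomSystem.exists_induced {V : Type} {G : SimpleGraph V} {q t : ℕ} {X : ℕ → ℕ → ℕ → V}
    (hX : HomSystem G (4 * t + 2) q X) (ht : 1 ≤ t)
    (hK : ¬ ContainsSub G (completeBipartiteGraph (Fin t) (Fin t))) :
    ∃ q' ≤ q, ContainsInduced G (subdivision (4 * t) ⊤ (fun _ => q')) := by
  let H : SimpleGraph (Fin (q + 2)) := G.comap (fun a => X 0 1 a)
  have hreach : ∀ a (ha : a < q + 2), H.Reachable 0 ⟨a, ha⟩ := by
    intro a
    induction a with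
    | zero => intro ha; exact SimpleGraph.Reachable.refl _
    | succ a ih =>
      intro ha
      refine (ih (by omega)).trans (SimpleGraph.Adj.reachable ?_)
      exact hX.adj 0 1 a (by omega) (by omega) (by omega)
  obtain ⟨d, g, hg0, hgd, hginj, hgadj⟩ := exists_induced_path H (hreach (q + 1) (by omega))
  have hdq : d ≤ q + 1 := by
    have := Fintype.card_le_of_injective (fun a : Fin (d + 1) => g a)
      (fun a b h => Fin.ext (hginj a (by omega) b (by omega) h))
    simp at this
    omega
  have hd0 : d ≠ 0 := by
    rintro rfl
    rw [hg0] at hgd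
    simpa using congrArg Fin.val hgd
  obtain ⟨q', rfl⟩ := Nat.exists_eq_succ_of_ne_zero hd0
  obtain ⟨γ, hγ⟩ : ∃ γ : ℕ → ℕ, ∀ a, γ a = g a := ⟨fun a => g a, fun _ => rfl⟩
  have hγ0 : γ 0 = 0 := by rw [hγ, hg0]; rfl
  have hγd : γ (q' + 1) = q + 1 := by rw [hγ, hgd]
  have hγinj : ∀ a ≤ q' + 1, ∀ b ≤ q' + 1, γ a = γ b → a = b := by
    intro a ha b hb h
    rw [hγ, hγ] at h
    exact hginj a ha b hb (Fin.ext h)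
  have hγle : ∀ a, γ a ≤ q + 1 := fun a => by rw [hγ]; omega
  have hγint : ∀ a, 1 ≤ a → a ≤ q' → 1 ≤ γ a ∧ γ a ≤ q := by
    intro a h1 h2
    have h3 := hγle a
    have h4 : γ a ≠ 0 := fun h => by
      have := hγinj a (by omega) 0 (by omega) (h.trans hγ0.symm)
      omega
    have h5 : γ a ≠ q + 1 := fun h => by
      have := hγinj a (by omega) (q' + 1) (by omega) (h.trans hγd.symm)
      omega
    omega
  have hpath : ∀ i j, i < j → j < 4 * t → ∀ a ≤ q' + 1, ∀ b ≤ q' + 1,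
      (G.Adj (X i j (γ a)) (X i j (γ b)) ↔ (a + 1 = b ∨ b + 1 = a)) := by
    intro i j hij hj a ha b hb
    rw [← hgadj a ha b hb]
    have hm : ∀ i j, i < j → j < 4 * t → StrictMono ![i, j, 4 * t, 4 * t + 1] := by
      intro i j hij hj
      rw [Fin.strictMono_iff_lt_succ]
      intro z
      fin_cases z <;> simp <;> omega
    have := hX.hom ![i, j, 4 * t, 4 * t + 1] ![0, 1, 4 * t, 4 * t + 1] (hm i j hij hj)
      (hm 0 1 (by omega) (by omega)) (by simp) (by simp) 0 1 (γ a) 0 1 (γ b) (hγle a) (hγle b)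
    simpa [H, hγ] using this
  -- An endpoint of a path, seen as a position on that path.
  have hfst : ∀ i j, X i i 0 = X i j (γ 0) := fun i j => by rw [hγ0]; exact (hX.first i j).symm
  have hlst : ∀ i j, i < j → j < 4 * t → X j j 0 = X i j (γ (q' + 1)) := fun i j hij hj => by
    rw [hγd]; exact (hX.last i j hij (by omega)).symm
  let F : SubdivVert (4 * t) ⊤ (fun _ => q') → V := fun x =>
    match x with
    | Sum.inl i => X i i 0
    | Sum.inr ⟨e, k⟩ => X e.1.1 e.1.2 (γ (k + 1))
  have hvb : ∀ i, ValidLabel q i i 0 := fun i => Or.inl ⟨rfl, rfl⟩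
  have hvi : ∀ (e : {p : Fin (4 * t) × Fin (4 * t) //
      p.1 < p.2 ∧ (⊤ : SimpleGraph (Fin (4 * t))).Adj p.1 p.2}) (k : Fin q'),
      ValidLabel q e.1.1 e.1.2 (γ (k + 1)) := fun e k =>
    Or.inr ⟨e.2.1, hγint _ (by omega) (by omega)⟩
  have hF : Function.Injective F := by
    rintro (i | ⟨e, k⟩) (j | ⟨e', k'⟩) h
    · have := hX.inj _ _ _ _ _ _ (hvb i) (hvb j) (by omega) (by omega) h
      exact congrArg Sum.inl (Fin.ext this.1)
    · have := hX.inj _ _ _ _ _ _ (hvb i) (hvi e' k') (by omega) (by omega) h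
      have h1 := hγint (k' + 1) (by omega) (by omega)
      omega
    · have := hX.inj _ _ _ _ _ _ (hvi e k) (hvb j) (by omega) (by omega) h
      have h1 := hγint (k + 1) (by omega) (by omega)
      omega
    · have := hX.inj _ _ _ _ _ _ (hvi e k) (hvi e' k') (by omega) (by omega) h
      obtain rfl : e = e' := Subtype.ext (Prod.ext (Fin.ext this.1) (Fin.ext this.2.1))
      have hk : (k : ℕ) < q' := k.2
      have hk' : (k' : ℕ) < q' := k'.2
      have h2 := hγinj (k + 1) (by omega) (k' + 1) (by omega) this.2.2
      obtain rfl : k = k' := Fin.ext (by omega)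
      rfl
  have hbb : ∀ i j : Fin (4 * t), i < j →
      ((subdivision (4 * t) ⊤ (fun _ => q')).Adj (Sum.inl i) (Sum.inl j) ↔
        G.Adj (F (Sum.inl i)) (F (Sum.inl j))) := by
    intro i j hij
    rw [subdivision_adj_inl_inl hij]
    change _ ↔ G.Adj (X i i 0) (X j j 0)
    rw [hfst i j, hlst i j hij j.2, hpath i j hij j.2 0 (by omega) (q' + 1) (by omega)]
    omega
  have hbi : ∀ (i : Fin (4 * t)) (e : {p : Fin (4 * t) × Fin (4 * t) //
      p.1 < p.2 ∧ (⊤ : SimpleGraph (Fin (4 * t))).Adj p.1 p.2}) (k : Fin q'),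
      ((subdivision (4 * t) ⊤ (fun _ => q')).Adj (Sum.inl i) (Sum.inr ⟨e, k⟩) ↔
        G.Adj (F (Sum.inl i)) (F (Sum.inr ⟨e, k⟩))) := by
    intro i e k
    rw [subdivision_adj_inl_inr]
    change _ ↔ G.Adj (X i i 0) (X e.1.1 e.1.2 (γ (k + 1)))
    have hlt : e.1.1 < e.1.2 := e.2.1
    by_cases h1 : e.1.1 = i
    · subst h1
      rw [hfst e.1.1 e.1.2, hpath _ _ hlt e.1.2.2 0 (by omega) (k + 1) (by omega)]
      have := hlt.ne'
      simp only [this, false_and, or_false, true_and]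
      omega
    by_cases h2 : e.1.2 = i
    · subst h2
      rw [hlst e.1.1 e.1.2 hlt e.1.2.2,
        hpath _ _ hlt e.1.2.2 (q' + 1) (by omega) (k + 1) (by omega)]
      simp only [h1, false_and, false_or, true_and]
      omega
    · have h1' : (e.1.1 : ℕ) ≠ i := fun h => h1 (Fin.ext h)
      have h2' : (e.1.2 : ℕ) ≠ i := fun h => h2 (Fin.ext h)
      simp only [h1, h2, false_and, or_false, false_iff]
      exact hX.not_adj ht (by omega) hK (x := i) (y := e.1.1) (hvb i) (hvi e k) (by omega)
        (by omega) (Or.inl rfl) ⟨h1'.symm, h2'.symm⟩ (Or.inl rfl) ⟨h1', h1'⟩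
  refine ⟨q', by omega, ⟨F, hF⟩, ?_⟩
  rintro (i | ⟨e, k⟩) (j | ⟨e', k'⟩)
  · rcases lt_trichotomy i j with h | rfl | h
    · exact hbb i j h
    · exact iff_of_false (SimpleGraph.irrefl _) (SimpleGraph.irrefl _)
    · exact (SimpleGraph.adj_comm _ _ _).trans ((hbb j i h).trans (SimpleGraph.adj_comm _ _ _))
  · exact hbi i e' k'
  · exact (SimpleGraph.adj_comm _ _ _).trans ((hbi j e k).trans (SimpleGraph.adj_comm _ _ _))
  · rw [subdivision_adj_inr_inr]
    change _ ↔ G.Adj (X e.1.1 e.1.2 (γ (k + 1))) (X e'.1.1 e'.1.2 (γ (k' + 1)))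
    have hk : (k : ℕ) < q' := k.2
    have hk' : (k' : ℕ) < q' := k'.2
    have hlt : (e.1.1 : ℕ) < e.1.2 := e.2.1
    have hlt' : (e'.1.1 : ℕ) < e'.1.2 := e'.2.1
    by_cases he : e.1 = e'.1
    · rw [← he, hpath _ _ hlt e.1.2.2 (k + 1) (by omega) (k' + 1) (by omega)]
      simp only [true_and]
      omega
    · have hne : ¬ ((e.1.1 : ℕ) = e'.1.1 ∧ (e.1.2 : ℕ) = e'.1.2) := fun h =>
        he (Prod.ext (Fin.ext h.1) (Fin.ext h.2))
      simp only [he, false_and, false_iff]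
      obtain ⟨x, hx, hx'⟩ : ∃ x : ℕ, (x = e.1.1 ∨ x = e.1.2) ∧ (x ≠ e'.1.1 ∧ x ≠ e'.1.2) := by
        by_cases h : (e.1.1 : ℕ) ≠ e'.1.1 ∧ (e.1.1 : ℕ) ≠ e'.1.2
        · exact ⟨_, Or.inl rfl, h⟩
        · exact ⟨_, Or.inr rfl, by omega⟩
      obtain ⟨y, hy, hy'⟩ : ∃ y : ℕ, (y = e'.1.1 ∨ y = e'.1.2) ∧ (y ≠ e.1.1 ∧ y ≠ e.1.2) := by
        by_cases h : (e'.1.1 : ℕ) ≠ e.1.1 ∧ (e'.1.1 : ℕ) ≠ e.1.2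
        · exact ⟨_, Or.inl rfl, h⟩
        · exact ⟨_, Or.inr rfl, by omega⟩
      exact hX.not_adj ht (by omega) hK (hvi e k) (hvi e' k') (by omega) (by omega) hx hx' hy hy'

/-! ### Labelling the vertices of a subdivided clique -/

/-- Position `a` on the path from `i` to `j` (for `i < j`) in the subdivision of `K_N`:
position `0` is the branch vertex `i`, positions `1, …, ℓ (i, j)` are the internal vertices and
every larger position is the branch vertex `j`. For `i = j` it is the branch vertex `i`. -/
def pathVert {N : ℕ} (ℓ : Fin N × Fin N → ℕ) (i j : Fin N) (a : ℕ) : SubdivVert N ⊤ ℓ :=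
  if a = 0 then Sum.inl i
  else if h : i < j ∧ 0 < a ∧ a ≤ ℓ (i, j) then
    Sum.inr ⟨⟨(i, j), h.1, h.1.ne⟩, ⟨a - 1, Nat.sub_one_lt_of_le h.2.1 h.2.2⟩⟩
  else Sum.inl j

lemma pathVert_zero {N : ℕ} (ℓ : Fin N × Fin N → ℕ) (i j : Fin N) :
    pathVert ℓ i j 0 = Sum.inl i :=
  if_pos rfl

lemma pathVert_mid {N : ℕ} {ℓ : Fin N × Fin N → ℕ} {i j : Fin N} {a : ℕ}
    (h : i < j ∧ 0 < a ∧ a ≤ ℓ (i, j)) : pathVert ℓ i j a =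
      Sum.inr ⟨⟨(i, j), h.1, h.1.ne⟩, ⟨a - 1, Nat.sub_one_lt_of_le h.2.1 h.2.2⟩⟩ :=
  (if_neg h.2.1.ne').trans (dif_pos h)

lemma pathVert_last {N : ℕ} {ℓ : Fin N × Fin N → ℕ} {i j : Fin N} {a : ℕ}
    (h : ℓ (i, j) < a) : pathVert ℓ i j a = Sum.inl j :=
  (if_neg (by omega)).trans (dif_neg (by omega))

lemma pathVert_adj {N : ℕ} {ℓ : Fin N × Fin N → ℕ} {i j : Fin N} {a : ℕ} (hij : i < j)
    (ha : a ≤ ℓ (i, j)) :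
    (subdivision N ⊤ ℓ).Adj (pathVert ℓ i j a) (pathVert ℓ i j (a + 1)) := by
  rcases Nat.eq_zero_or_pos a with rfl | h0
  · rw [pathVert_zero]
    rcases Nat.eq_zero_or_pos (ℓ (i, j)) with h | h
    · rw [pathVert_last (by omega)]
      exact (subdivision_adj_inl_inl hij).2 h
    · rw [pathVert_mid ⟨hij, by omega, by omega⟩]
      exact subdivision_adj_inl_inr.2 (Or.inl ⟨rfl, rfl⟩)
  · rw [pathVert_mid ⟨hij, h0, ha⟩]
    rcases Nat.lt_or_ge (ℓ (i, j)) (a + 1) with h | h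
    · rw [pathVert_last h]
      exact (subdivision_adj_inl_inr.2 (Or.inr ⟨rfl, by simp only; omega⟩)).symm
    · rw [pathVert_mid ⟨hij, by omega, h⟩]
      exact subdivision_adj_inr_inr.2 ⟨rfl, Or.inl (by simp only; omega)⟩

lemma pathVert_inj {N : ℕ} {ℓ : Fin N × Fin N → ℕ} {i j k l : Fin N} {a b : ℕ}
    (h₁ : (i = j ∧ a = 0) ∨ (i < j ∧ 1 ≤ a ∧ a ≤ ℓ (i, j)))
    (h₂ : (k = l ∧ b = 0) ∨ (k < l ∧ 1 ≤ b ∧ b ≤ ℓ (k, l)))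
    (h : pathVert ℓ i j a = pathVert ℓ k l b) : i = k ∧ j = l ∧ a = b := by
  rcases h₁ with ⟨rfl, rfl⟩ | h₁ <;> rcases h₂ with ⟨rfl, rfl⟩ | h₂
  · rw [pathVert_zero, pathVert_zero] at h
    have := Sum.inl.inj h
    exact ⟨this, this, rfl⟩
  · rw [pathVert_zero, pathVert_mid h₂] at h
    exact absurd h Sum.inl_ne_inr
  · rw [pathVert_zero, pathVert_mid h₁] at h
    exact absurd h Sum.inr_ne_inl
  · rw [pathVert_mid h₁, pathVert_mid h₂] at h
    have h3 := Sigma.mk.inj (Sum.inr.inj h)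
    have h4 := Prod.mk.inj (Subtype.ext_iff.1 h3.1)
    obtain ⟨rfl, rfl⟩ := h4
    have h5 := congrArg Fin.val (eq_of_heq h3.2)
    simp only at h5
    exact ⟨rfl, rfl, by omega⟩

/-- For all `t ≥ 1` and `p ≥ 0` there is `N` such that every finite graph with no `K_{t,t}`
subgraph and no induced `q`-subdivision of `K_{4t}` for any `q ≤ p` contains no
`≤p`-subdivision of `K_N` as a subgraph. -/
theorem no_subdivided_clique_of_Ktt_free (t p : ℕ) (ht : 1 ≤ t) :
    ∃ N : ℕ, ∀ (V : Type) [Fintype V] (G : SimpleGraph V),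
      ¬ ContainsSub G (completeBipartiteGraph (Fin t) (Fin t)) →
      (∀ q : ℕ, q ≤ p →
        ¬ ContainsInduced G (subdivision (4 * t) ⊤ (fun _ => q))) →
      ∀ ℓ : Fin N × Fin N → ℕ, (∀ e, ℓ e ≤ p) →
        ¬ ContainsSub G (subdivision N ⊤ ℓ) := by
  -- A 4-tuple is coloured by the subdivision number of its first pair and by all adjacencies
  -- among positions on the paths it spans. Of the four spare indices, two pad a pair to
  -- a 4-tuple when comparing lengths, and two do so when comparing chords.
  obtain ⟨N, hN⟩ := ramsey_tuple (Fin (p + 1) ×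
    (Fin 4 × Fin 4 × Fin (p + 2) → Fin 4 × Fin 4 × Fin (p + 2) → Prop)) 4 (4 * t + 4)
  refine ⟨N, fun V _ G hK hI ℓ hℓ hsub => ?_⟩
  obtain ⟨φ, hφ⟩ := hsub
  obtain ⟨w, hw, hhom⟩ := hN (fun e => (⟨ℓ (e 0, e 1), Nat.lt_succ_of_le (hℓ _)⟩,
    fun x y => G.Adj (φ (pathVert ℓ (e x.1) (e x.2.1) x.2.2))
      (φ (pathVert ℓ (e y.1) (e y.2.1) y.2.2))))
  -- `w`, with indices extended to all natural numbers by truncation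
  let v : ℕ → Fin N := fun i => w ⟨min i (4 * t + 3), by omega⟩
  have hv : ∀ i j, i < j → j < 4 * t + 4 → v i < v j := by
    intro i j hij hj
    apply hw
    simp only [Fin.mk_lt_mk]
    omega
  have hhom' : ∀ e e' : Fin 4 → ℕ, StrictMono e → StrictMono e' → e 3 < 4 * t + 4 →
      e' 3 < 4 * t + 4 → ℓ (v (e 0), v (e 1)) = ℓ (v (e' 0), v (e' 1)) ∧
      ∀ r r' a s s' b, a ≤ p + 1 → b ≤ p + 1 →
        (G.Adj (φ (pathVert ℓ (v (e r)) (v (e r')) a)) (φ (pathVert ℓ (v (e s)) (v (e s')) b)) ↔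
        G.Adj (φ (pathVert ℓ (v (e' r)) (v (e' r')) a))
          (φ (pathVert ℓ (v (e' s)) (v (e' s')) b))) := by
    intro e e' he he' hb hb'
    have hmono : ∀ e : Fin 4 → ℕ, StrictMono e → e 3 < 4 * t + 4 →
        StrictMono (fun z => (⟨min (e z) (4 * t + 3), by omega⟩ : Fin (4 * t + 4))) := by
      intro e he hb z z' hz
      have h1 := he hz
      have h2 : e z' ≤ e 3 := he.monotone (Fin.le_last z')
      simp only [Fin.mk_lt_mk]
      omega
    have := hhom _ _ (hmono e he hb) (hmono e' he' hb')
    rw [Prod.mk.injEq] at this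
    refine ⟨congrArg Fin.val this.1, fun r r' a s s' b ha hb => ?_⟩
    have h2 := congrFun (congrFun this.2 (r, r', ⟨a, by omega⟩)) (s, s', ⟨b, by omega⟩)
    exact iff_of_eq h2
  obtain ⟨q, hq⟩ : ∃ q, q = ℓ (v 0, v 1) := ⟨_, rfl⟩
  have hqp : q ≤ p := hq ▸ hℓ _
  have hlen : ∀ i j, i < j → j < 4 * t + 2 → ℓ (v i, v j) = q := by
    intro i j hij hj
    have hm : ∀ i j, i < j → j < 4 * t + 2 → StrictMono ![i, j, 4 * t + 2, 4 * t + 3] := by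
      intro i j hij hj
      rw [Fin.strictMono_iff_lt_succ]
      intro z
      fin_cases z <;> simp <;> omega
    have := (hhom' _ _ (hm i j hij hj) (hm 0 1 (by omega) (by omega)) (by simp) (by simp)).1
    rw [hq]
    simpa using this
  have hX : HomSystem G (4 * t + 2) q (fun i j a => φ (pathVert ℓ (v i) (v j) a)) := by
    have hlab : ∀ i j a, ValidLabel q i j a → j < 4 * t + 2 →
        (v i = v j ∧ a = 0) ∨ (v i < v j ∧ 1 ≤ a ∧ a ≤ ℓ (v i, v j)) := by
      rintro i j a (⟨rfl, rfl⟩ | ⟨h, h1, h2⟩) hj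
      · exact Or.inl ⟨rfl, rfl⟩
      · exact Or.inr ⟨hv i j h (by omega), h1, by rw [hlen i j h hj]; exact h2⟩
    have hvinj : ∀ i j, i < 4 * t + 2 → j < 4 * t + 2 → v i = v j → i = j := by
      intro i j hi hj h
      rcases lt_trichotomy i j with h' | h' | h'
      · exact absurd h (hv i j h' (by omega)).ne
      · exact h'
      · exact absurd h (hv j i h' (by omega)).ne'
    refine ⟨?_, ?_, ?_, ?_, ?_⟩
    · intro i j a k l b h₁ h₂ hj hl h
      have := pathVert_inj (hlab i j a h₁ hj) (hlab k l b h₂ hl) (φ.injective h)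
      have hi := h₁.le
      have hk := h₂.le
      exact ⟨hvinj i k (by omega) (by omega) this.1, hvinj j l hj hl this.2.1, this.2.2⟩
    · intro e e' he he' hb hb' r r' a s s' b ha hb2
      exact (hhom' e e' he he' (by omega) (by omega)).2 r r' a s s' b (by omega) (by omega)
    · intro i j a hij hj ha
      exact hφ _ _ (pathVert_adj (hv i j hij (by omega)) (by rw [hlen i j hij hj]; exact ha))
    · intro i j
      simp only [pathVert_zero]
    · intro i j hij hj
      simp only [pathVert_zero]
      rw [pathVert_last (by rw [hlen i j hij hj]; omega)]
  obtain ⟨q', hq', hind⟩ := hX.exists_induced ht hK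
  exact hI q' (hq'.trans hqp) hind
end

section
/- Every finite simple graph with linear NLC-width at most k admits a partition of its vertex set into at most (k·2^{k+1})^{3k^k} parts, each of which induces a cograph admitting a cotree of depth at most 3k^k. -/
/-! Number the letters of the word. For positions `x < y`, adjacency says that the color of `x`,
transported by the composite of the recolorings strictly between `x` and `y`, lies in the set of
colors joined by `y`. The vertex set is split hierarchically, in the spirit of Simon's factorization forests.

Fix `ρ` and a set of positions with least element `a` whose pairwise composites have rank at
least `ρ`. Choose cuts greedily (`IsCut`) so that the composite between two cuts has rank at
most `ρ`, while a stretch containing no cut has rank above `ρ` (`exists_cut_of_rank_le`). Each cut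
`z` has a kind, the composite `t` from `a` to `z`, which has rank exactly `ρ`. Between two cuts of
the same kind `t` the composite fixes the image of `t` pointwise and, by ranks, has exactly that
image. Hence a vertex that has traversed a stretch between two such cuts keeps one and the same
color at all later cuts of kind `t`, and its adjacency to a later vertex `y` depends only on that
color and on a set of colors attached to `y` (`exists_types`).

Split the positions at all cuts of kind `t`, and classify them by the parity of the index of their
piece, by this color and by this set: `2 * k * 2 ^ k = k * 2 ^ (k + 1)` classes. Two positions of
one class in different pieces are separated by at least two cuts, so all such pairs in a class are
adjacent or none is, which is a node of a cotree (`colorable_split`). After treating all kinds of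
rank `ρ` no cuts are left, so the rank has increased (`colorable_of_rank`). Each self-map of `[k]`
is used as a kind for at most one level, so `k ^ k` levels suffice, and the cotrees have depth at
most `k ^ k + 1 ≤ 3 * k ^ k`. -/

open scoped Classical

/-- `x` is an ancestor of `w` in the rooted tree given by parent map `par`. -/
def IsAnc {W : Type} (par : W → W) (x w : W) : Prop := ∃ k : ℕ, par^[k] w = x

/-- `x` is the least common ancestor of `u` and `v`: a common ancestor of which every
common ancestor is an ancestor. -/
def IsLCA {W : Type} (par : W → W) (x u v : W) : Prop :=
  IsAnc par x u ∧ IsAnc par x v ∧ ∀ y : W, IsAnc par y u → IsAnc par y v → IsAnc par y x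

/-- The number of nodes on the path from the root to `w` (the depth of `w`, counting nodes). -/
noncomputable def pathNodes {W : Type} (par : W → W) (root w : W) : ℕ :=
  sInf {k : ℕ | par^[k] w = root} + 1

/-- A cotree for a graph `H`: a finite rooted tree (given by a parent map) whose leaves are
exactly the vertices of `H`, with internal nodes labeled by `Bool`, such that two distinct
vertices are adjacent in `H` iff their least common ancestor is labeled `true`. -/
structure Cotree {α : Type} (H : SimpleGraph α) where
  W : Type
  fintypeW : Fintype W
  root : W
  par : W → W
  par_root : par root = root
  reaches_root : ∀ w : W, ∃ k : ℕ, par^[k] w = root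
  leafEmb : α ↪ W
  leaf_iff : ∀ w : W, (∀ w' : W, par w' = w → w' = w) ↔ ∃ a : α, leafEmb a = w
  label : W → Bool
  adj_iff : ∀ a b : α, a ≠ b → ∀ x : W, IsLCA par x (leafEmb a) (leafEmb b) →
    (H.Adj a b ↔ label x = true)

/-- The cotree has depth at most `d`: every root-to-leaf path has at most `d` nodes. -/
noncomputable def Cotree.depthLE {α : Type} {H : SimpleGraph α} (T : Cotree H) (d : ℕ) : Prop :=
  ∀ a : α, pathNodes T.par T.root (T.leafEmb a) ≤ d

/-- A letter of the alphabet `Ω_k(V)`: a vertex `v`, a color `c ∈ [k]`, a set of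
colors `e ⊆ [k]` and a recoloring `r : [k] → [k]`. -/
structure NLCLetter (V : Type) (k : ℕ) where
  v : V
  c : Fin k
  e : Finset (Fin k)
  r : Fin k → Fin k

/-- One step of building the colored graph `Ξ(α)`: the state consists of the adjacency relation
built so far together with the (partial) coloring of the vertices introduced so far.  Processing
a letter `a` adds the vertex `a.v` with color `a.c`, joins it to all current vertices whose
current color lies in `a.e`, and then recolors every old vertex by `a.r`. -/
noncomputable def nlcStep {V : Type} {k : ℕ}
    (st : (V → V → Prop) × (V → Option (Fin k))) (a : NLCLetter V k) :
    (V → V → Prop) × (V → Option (Fin k)) :=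
  (fun x y => st.1 x y ∨
      (x = a.v ∧ ∃ cy ∈ a.e, st.2 y = some cy) ∨
      (y = a.v ∧ ∃ cx ∈ a.e, st.2 x = some cx),
   fun x => if x = a.v then some a.c else (st.2 x).map a.r)

/-- The colored graph `Ξ(α)` associated with a word `α` over `Ω_k(V)`, as a pair
(adjacency relation, partial coloring). -/
noncomputable def nlcRun {V : Type} {k : ℕ} (α : List (NLCLetter V k)) :
    (V → V → Prop) × (V → Option (Fin k)) :=
  α.foldl nlcStep (fun _ _ => False, fun _ => none)

/-- The graph `G` is `Ξ(α)` (forgetting colors) for some admissible word `α` of width `k`,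
i.e. `G` has linear NLC-width at most `k` witnessed at width exactly `k`. -/
noncomputable def LinNLCWitness {V : Type} [Fintype V] (G : SimpleGraph V) (k : ℕ) : Prop :=
  ∃ α : List (NLCLetter V k), (α.map NLCLetter.v).Nodup ∧
    (∀ x : V, x ∈ α.map NLCLetter.v) ∧
    (∀ x y : V, G.Adj x y ↔ (nlcRun α).1 x y)

/-- `G` has linear NLC-width at most `k`. -/
noncomputable def LinNLCWidthLE {V : Type} [Fintype V] (G : SimpleGraph V) (k : ℕ) : Prop :=
  ∃ k' : ℕ, k' ≤ k ∧ LinNLCWitness G k'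

/-! ### Compositions of recolorings and ranks -/

/-- The composite `r (b-1) ∘ ⋯ ∘ r a` of the recolorings at positions in `[a, b)`
(the identity when `b ≤ a`). -/
def recol {k : ℕ} (r : ℕ → Fin k → Fin k) (a : ℕ) : ℕ → Fin k → Fin k
  | 0 => id
  | b + 1 => if a ≤ b then r b ∘ recol r a b else id

lemma recol_self {k : ℕ} (r : ℕ → Fin k → Fin k) (a : ℕ) : recol r a a = id := by
  cases a <;> simp [recol]

lemma recol_trans {k : ℕ} (r : ℕ → Fin k → Fin k) {a b c : ℕ} (hab : a ≤ b) (hbc : b ≤ c) :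
    recol r a c = recol r b c ∘ recol r a b := by
  induction c, hbc using Nat.le_induction with
  | base => rw [recol_self]; rfl
  | succ n hn ih =>
    simp only [recol]
    rw [if_pos (hab.trans hn), if_pos hn, ih]
    rfl

/-- The size of the image of a self-map of `[k]`. -/
noncomputable def fnRank {k : ℕ} (f : Fin k → Fin k) : ℕ := (Finset.univ.image f).card

lemma fnRank_comp_le_left {k : ℕ} (g f : Fin k → Fin k) : fnRank (g ∘ f) ≤ fnRank g := by
  apply Finset.card_le_card
  intro x hx
  simp only [Finset.mem_image, Finset.mem_univ, true_and, Function.comp] at hx ⊢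
  obtain ⟨y, hy⟩ := hx
  exact ⟨f y, hy⟩

lemma fnRank_comp_le_right {k : ℕ} (g f : Fin k → Fin k) : fnRank (g ∘ f) ≤ fnRank f := by
  unfold fnRank
  rw [← Finset.image_image]
  exact Finset.card_image_le

lemma fnRank_le {k : ℕ} (f : Fin k → Fin k) : fnRank f ≤ k := by
  simpa [fnRank] using (Finset.card_image_le (s := Finset.univ) (f := f))

/-- The greedy cut positions from `a` on: `q` is a cut when every earlier cut `p` is separated
from `q` by recolorings whose composite has rank at most `ρ`. In particular `a` is a cut. -/
def IsCut {k : ℕ} (r : ℕ → Fin k → Fin k) (ρ a : ℕ) (q : ℕ) : Prop :=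
  a ≤ q ∧ ∀ p, (_ : p < q) → IsCut r ρ a p → fnRank (recol r p q) ≤ ρ
termination_by q

lemma isCut_start {k : ℕ} (r : ℕ → Fin k → Fin k) (ρ a : ℕ) : IsCut r ρ a a := by
  rw [IsCut]
  refine ⟨le_rfl, fun p hp h => ?_⟩
  rw [IsCut] at h
  omega

lemma IsCut.rank_le {k : ℕ} {r : ℕ → Fin k → Fin k} {ρ a p q : ℕ} (hp : IsCut r ρ a p)
    (hq : IsCut r ρ a q) (h : p < q) : fnRank (recol r p q) ≤ ρ := by
  rw [IsCut] at hq
  exact hq.2 p h hp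

lemma IsCut.start_le {k : ℕ} {r : ℕ → Fin k → Fin k} {ρ a q : ℕ}
    (hq : IsCut r ρ a q) : a ≤ q := by
  rw [IsCut] at hq
  exact hq.1

/-- A stretch without cuts has rank above `ρ`: if `y` is not a cut, some cut `p < y` has
`recol r p y` of rank above `ρ`, and `p ≤ x` would force the same for `recol r x y`. -/
lemma exists_cut_of_rank_le {k : ℕ} {r : ℕ → Fin k → Fin k} {ρ a x y : ℕ} (hax : a ≤ x)
    (hxy : x < y) (h : fnRank (recol r x y) ≤ ρ) : ∃ z, x < z ∧ z ≤ y ∧ IsCut r ρ a z := by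
  by_cases hy : IsCut r ρ a y
  · exact ⟨y, hxy, le_rfl, hy⟩
  · have hy' := hy
    rw [IsCut] at hy'
    push Not at hy'
    obtain ⟨p, hpy, hp, hr⟩ := hy' (by omega)
    refine ⟨p, ?_, hpy.le, hp⟩
    by_contra hpx
    rw [recol_trans r (not_lt.mp hpx) hxy.le] at hr
    have := fnRank_comp_le_left (recol r x y) (recol r p x)
    omega

/-! ### Layered cotrees and colorings by them -/

/-- `R` restricted to `A` has a cotree all of whose leaves lie `d` levels below the root. Leaves
are given by their addresses (lists of length `d`), and internal nodes by the proper prefixes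
of these; the label of the longest common prefix decides adjacency. -/
def Layered (R : ℕ → ℕ → Prop) (d : ℕ) (A : Set ℕ) : Prop :=
  ∃ (addr : ℕ → List ℕ) (lab : List ℕ → Bool), (∀ x ∈ A, (addr x).length = d) ∧
    Set.InjOn addr A ∧ ∀ x ∈ A, ∀ y ∈ A, ∀ n, (addr x).take n = (addr y).take n →
      (addr x).take (n + 1) ≠ (addr y).take (n + 1) →
      (R x y ↔ lab ((addr x).take n) = true)

lemma Layered.mono {R : ℕ → ℕ → Prop} {d : ℕ} {A B : Set ℕ} (h : Layered R d A) (hB : B ⊆ A) :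
    Layered R d B := by
  obtain ⟨addr, lab, h1, h2, h3⟩ := h
  exact ⟨addr, lab, fun x hx => h1 x (hB hx), h2.mono hB,
    fun x hx y hy => h3 x (hB hx) y (hB hy)⟩

lemma Layered.of_subsingleton {R : ℕ → ℕ → Prop} {d : ℕ} {A : Set ℕ} (h : A.Subsingleton) :
    Layered R d A := by
  refine ⟨fun _ => List.replicate d 0, fun _ => true, by simp, ?_, ?_⟩
  · exact fun x hx y hy _ => h hx hy
  · intro x _ y _ n _ h2
    exact absurd rfl h2

/-- Adding a new root above the layered cotrees of the fibres of `f`. -/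
lemma Layered.step {R : ℕ → ℕ → Prop} {d : ℕ} {A : Set ℕ} (f : ℕ → ℕ) (b : Prop)
    (h : ∀ p, Layered R d {x | x ∈ A ∧ f x = p})
    (hb : ∀ x ∈ A, ∀ y ∈ A, f x ≠ f y → (R x y ↔ b)) : Layered R (d + 1) A := by
  choose addr lab h1 h2 h3 using h
  refine ⟨fun x => f x :: addr (f x) x, fun l => match l with
    | [] => decide b
    | p :: l => lab p l, ?_, ?_, ?_⟩
  · intro x hx
    simp [h1 (f x) x ⟨hx, rfl⟩]
  · intro x hx y hy hxy
    simp only [List.cons.injEq] at hxy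
    obtain ⟨e1, e2⟩ := hxy
    rw [← e1] at e2
    exact h2 (f x) ⟨hx, rfl⟩ ⟨hy, e1.symm⟩ e2
  · intro x hx y hy n e1 e2
    cases n with
    | zero =>
      simp only [zero_add, List.take_succ_cons, List.take_zero, ne_eq, List.cons.injEq,
        and_true] at e2
      simpa using hb x hx y hy e2
    | succ n =>
      simp only [List.take_succ_cons, List.cons.injEq, ne_eq, not_and] at e1 e2 ⊢
      obtain ⟨e0, e1⟩ := e1
      rw [← e0] at e1
      have e2 := e2 e0
      rw [← e0] at e2
      exact h3 (f x) x ⟨hx, rfl⟩ y ⟨hy, e0.symm⟩ n e1 e2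

/-- `A` splits into at most `N ^ d` classes, each with a layered cotree of `d` levels. -/
def ColorableBy (R : ℕ → ℕ → Prop) (N d : ℕ) (A : Set ℕ) : Prop :=
  ∃ t : ℕ → Fin (N ^ d), ∀ i, Layered R d {x | x ∈ A ∧ t x = i}

/-! ### The hierarchical splitting of a word -/

/-- The color of the vertex at position `x` when position `y > x` is about to be processed. -/
def colAt {k : ℕ} (c : ℕ → Fin k) (r : ℕ → Fin k → Fin k) (x y : ℕ) : Fin k :=
  recol r (x + 1) y (c x)

/-- Adjacency between positions of the word with colors `c`, joins `E` and recolorings `r`. -/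
def PosAdj {k : ℕ} (c : ℕ → Fin k) (E : ℕ → Finset (Fin k)) (r : ℕ → Fin k → Fin k)
    (x y : ℕ) : Prop :=
  (x < y ∧ colAt c r x y ∈ E y) ∨ (y < x ∧ colAt c r y x ∈ E x)

lemma posAdj_of_lt {k : ℕ} (c : ℕ → Fin k) (E : ℕ → Finset (Fin k)) (r : ℕ → Fin k → Fin k)
    {x y : ℕ} (h : x < y) : PosAdj c E r x y ↔ colAt c r x y ∈ E y := by
  simp [PosAdj, h, h.not_gt]

lemma posAdj_comm {k : ℕ} (c : ℕ → Fin k) (E : ℕ → Finset (Fin k)) (r : ℕ → Fin k → Fin k)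
    (x y : ℕ) : PosAdj c E r x y ↔ PosAdj c E r y x := by
  simp [PosAdj, or_comm]

lemma colAt_trans {k : ℕ} (c : ℕ → Fin k) (r : ℕ → Fin k → Fin k) {x z y : ℕ} (h : x < z)
    (h' : z ≤ y) : colAt c r x y = recol r z y (colAt c r x z) := by
  simp [colAt, recol_trans r (Nat.succ_le_of_lt h) h']

/-- A cut whose composite from the starting position `a` is exactly `t`. -/
def IsCutOf {k : ℕ} (r : ℕ → Fin k → Fin k) (ρ a : ℕ) (t : Fin k → Fin k) (z : ℕ) : Prop :=
  IsCut r ρ a z ∧ recol r a z = t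

/-- Between two cuts of the same kind `t`, the recolorings fix the image of `t`. -/
lemma IsCutOf.fix {k : ℕ} {r : ℕ → Fin k → Fin k} {ρ a : ℕ} {t : Fin k → Fin k} {z z' : ℕ}
    (hz : IsCutOf r ρ a t z) (hz' : IsCutOf r ρ a t z') (h : z ≤ z') {s : Fin k}
    (hs : s ∈ Set.range t) : recol r z z' s = s := by
  obtain ⟨u, rfl⟩ := hs
  have := congrFun (recol_trans r hz.1.start_le h) u
  simp only [Function.comp, hz.2, hz'.2] at this
  exact this.symm

/-- For `y ≥ z` with `z` any cut of kind `t`, the way position `y` reads colors in the image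
of `t` does not depend on `z`. -/
lemma IsCutOf.read_eq {k : ℕ} {r : ℕ → Fin k → Fin k} {ρ a : ℕ} {t : Fin k → Fin k}
    {z z' y : ℕ} (hz : IsCutOf r ρ a t z) (hz' : IsCutOf r ρ a t z') (hy : z ≤ y)
    (hy' : z' ≤ y) {s : Fin k} (hs : s ∈ Set.range t) : recol r z y s = recol r z' y s := by
  rcases le_total z z' with h | h
  · rw [recol_trans r h hy', Function.comp, hz.fix hz' h hs]
  · rw [recol_trans r h hy, Function.comp, hz'.fix hz h hs]

/-- A vertex that has passed a whole stretch between two cuts of kind `t` has a color in the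
image of `t`: the stretch has rank at most `ρ`, and its image contains that of `t`, which has
`ρ` elements. -/
lemma colAt_mem_range {k : ℕ} {c : ℕ → Fin k} {r : ℕ → Fin k → Fin k} {ρ a : ℕ}
    {t : Fin k → Fin k} (ht : fnRank t = ρ) {x z z' : ℕ} (hz : IsCutOf r ρ a t z)
    (hz' : IsCutOf r ρ a t z') (hx : x < z) (h : z < z') : colAt c r x z' ∈ Set.range t := by
  have hsub : Finset.univ.image t ⊆ Finset.univ.image (recol r z z') := by
    intro s hs
    simp only [Finset.mem_image, Finset.mem_univ, true_and] at hs ⊢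
    obtain ⟨u, rfl⟩ := hs
    exact ⟨t u, hz.fix hz' h.le ⟨u, rfl⟩⟩
  have hle : fnRank (recol r z z') ≤ fnRank t := ht ▸ hz.1.rank_le hz'.1 h
  have heq := Finset.eq_of_subset_of_card_le hsub hle
  have : recol r z z' (colAt c r x z) ∈ Finset.univ.image (recol r z z') :=
    Finset.mem_image_of_mem _ (Finset.mem_univ _)
  rw [← heq, ← colAt_trans c r hx h.le] at this
  simpa using this

/-- Once a vertex has passed a whole stretch between cuts of kind `t`, its color at all later
cuts of kind `t` is the same. -/
lemma colAt_cut_eq {k : ℕ} {c : ℕ → Fin k} {r : ℕ → Fin k → Fin k} {ρ a : ℕ}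
    {t : Fin k → Fin k} (ht : fnRank t = ρ) {x z z' w w' : ℕ} (hz : IsCutOf r ρ a t z)
    (hz' : IsCutOf r ρ a t z') (hx : x < z) (h : z < z') (hw : IsCutOf r ρ a t w)
    (hw' : IsCutOf r ρ a t w') (hxw : x < w) (h' : w < w') :
    colAt c r x z' = colAt c r x w' := by
  rcases le_total z' w' with hh | hh
  · rw [colAt_trans c r (hx.trans h) hh, hz'.fix hw' hh (colAt_mem_range ht hz hz' hx h)]
  · rw [colAt_trans c r (hxw.trans h') hh, hw'.fix hz' hh (colAt_mem_range ht hw hw' hxw h')]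

/-- Adjacency across at least two cuts of kind `t` is determined by a color attached to the left
position and a set of colors attached to the right position. -/
lemma exists_types {k : ℕ} (c : ℕ → Fin k) (E : ℕ → Finset (Fin k)) (r : ℕ → Fin k → Fin k)
    {ρ a : ℕ} {t : Fin k → Fin k} (ht : fnRank t = ρ) :
    ∃ (s : ℕ → Fin k) (I : ℕ → Finset (Fin k)), ∀ x y z z', IsCutOf r ρ a t z →
      IsCutOf r ρ a t z' → x < z → z < z' → z' ≤ y → (PosAdj c E r x y ↔ s x ∈ I y) := by
  refine ⟨fun x => if h : ∃ z z', IsCutOf r ρ a t z ∧ IsCutOf r ρ a t z' ∧ x < z ∧ z < z'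
      then colAt c r x h.choose_spec.choose else c x,
    fun y => if h : ∃ z, IsCutOf r ρ a t z ∧ z ≤ y
      then Finset.univ.filter fun u => recol r h.choose y u ∈ E y else ∅, ?_⟩
  intro x y z z' hz hz' hx hzz hy
  have h1 : ∃ z z', IsCutOf r ρ a t z ∧ IsCutOf r ρ a t z' ∧ x < z ∧ z < z' :=
    ⟨z, z', hz, hz', hx, hzz⟩
  have h2 : ∃ z, IsCutOf r ρ a t z ∧ z ≤ y := ⟨z', hz', hy⟩
  obtain ⟨w1, w2, w3, w4⟩ := h1.choose_spec.choose_spec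
  obtain ⟨v1, v2⟩ := h2.choose_spec
  beta_reduce
  rw [dif_pos h1, dif_pos h2, posAdj_of_lt c E r (by omega),
    ← colAt_cut_eq ht hz hz' hx hzz w1 w2 w3 w4, Finset.mem_filter,
    colAt_trans c r (hx.trans hzz) hy,
    hz'.read_eq v1 hy v2 (colAt_mem_range ht hz hz' hx hzz)]
  simp

/-- Splitting at all cuts of kind `t`: each position is classified by the parity of the number of
such cuts before it together with its types from `exists_types`, at the price of one level. -/
lemma colorable_split {k : ℕ} (c : ℕ → Fin k) (E : ℕ → Finset (Fin k)) (r : ℕ → Fin k → Fin k)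
    {ρ a d : ℕ} {t : Fin k → Fin k} (ht : fnRank t = ρ) {A : Set ℕ} (hA : ∀ x ∈ A, a ≤ x)
    (h : ∀ B ⊆ A, (∀ x ∈ B, ∀ y ∈ B, ∀ z, x < z → z ≤ y → ¬ IsCutOf r ρ a t z) →
      ColorableBy (PosAdj c E r) (k * 2 ^ (k + 1)) d B) :
    ColorableBy (PosAdj c E r) (k * 2 ^ (k + 1)) (d + 1) A := by
  obtain ⟨s, I, hsI⟩ := exists_types c E r (a := a) ht
  let S : ℕ → Finset ℕ := fun x => (Finset.Ioc a x).filter fun z => IsCutOf r ρ a t z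
  let f : ℕ → ℕ := fun x => (S x).card
  have Smono : ∀ {x y}, x ≤ y → S x ⊆ S y := fun hxy =>
    Finset.filter_subset_filter _ (Finset.Ioc_subset_Ioc_right hxy)
  have h1 : ∀ p, ∃ τ : ℕ → Fin ((k * 2 ^ (k + 1)) ^ d), ∀ i,
      Layered (PosAdj c E r) d {x | x ∈ {x | x ∈ A ∧ f x = p} ∧ τ x = i} := by
    intro p
    refine h {x | x ∈ A ∧ f x = p} (fun x hx => hx.1) ?_
    rintro x ⟨hx, fx⟩ y ⟨hy, fy⟩ z hxz hzy hz
    have : S x ⊂ S y := by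
      refine (Finset.ssubset_iff_of_subset (Smono (by omega))).mpr ⟨z, ?_, ?_⟩
      · simp only [S, Finset.mem_filter, Finset.mem_Ioc]
        exact ⟨⟨(hA x hx).trans_lt hxz, hzy⟩, hz⟩
      · simp only [S, Finset.mem_filter, Finset.mem_Ioc]
        omega
    have := Finset.card_lt_card this
    simp only [f] at fx fy
    omega
  choose τ hτ using h1
  have hcard : Fintype.card (Fin ((k * 2 ^ (k + 1)) ^ d) × Bool × Fin k × Finset (Fin k)) =
      (k * 2 ^ (k + 1)) ^ (d + 1) := by
    simp only [Fintype.card_prod, Fintype.card_fin, Fintype.card_bool, Fintype.card_finset]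
    ring
  let e := Fintype.equivFinOfCardEq hcard
  refine ⟨fun x => e (τ (f x) x, decide (Even (f x)), s x, I x), fun i => ?_⟩
  obtain ⟨⟨i0, b0, s0, I0⟩, rfl⟩ := e.surjective i
  simp only [EmbeddingLike.apply_eq_iff_eq, Prod.mk.injEq]
  have key : ∀ x ∈ A, ∀ y ∈ A, f x < f y → (Even (f x) ↔ Even (f y)) →
      (PosAdj c E r x y ↔ s x ∈ I y) := by
    intro x hx y hy hlt hev
    have hxy : x < y := by
      by_contra hh
      have := Finset.card_le_card (Smono (not_lt.mp hh))
      simp only [f] at hlt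
      omega
    have h2 : f x + 2 ≤ f y := by
      by_contra hh
      have : f y = f x + 1 := by omega
      rw [this, Nat.even_add_one] at hev
      tauto
    have h3 : 1 < (S y \ S x).card := by
      rw [Finset.card_sdiff_of_subset (Smono hxy.le)]
      simp only [f] at h2
      omega
    obtain ⟨z, hz, z', hz', hne⟩ := Finset.one_lt_card.mp h3
    simp only [S, Finset.mem_sdiff, Finset.mem_filter, Finset.mem_Ioc, not_and] at hz hz'
    have hz2 : x < z := by
      by_contra hh
      exact hz.2 ⟨hz.1.1.1, by omega⟩ hz.1.2
    have hz2' : x < z' := by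
      by_contra hh
      exact hz'.2 ⟨hz'.1.1.1, by omega⟩ hz'.1.2
    rcases lt_or_gt_of_ne hne with hlt' | hlt'
    · exact hsI x y z z' hz.1.2 hz'.1.2 hz2 hlt' hz'.1.1.2
    · exact hsI x y z' z hz'.1.2 hz.1.2 hz2' hlt' hz.1.1.2
  refine Layered.step f (s0 ∈ I0) (fun p => (hτ p i0).mono ?_) ?_
  · rintro x ⟨⟨hx, hx1, -⟩, rfl⟩
    exact ⟨⟨hx, rfl⟩, hx1⟩
  · rintro x ⟨hx, -, hbx, hsx, hIx⟩ y ⟨hy, -, hby, hsy, hIy⟩ hne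
    have hev : Even (f x) ↔ Even (f y) := by
      rw [← hby] at hbx
      simpa using hbx
    rcases lt_or_gt_of_ne hne with hlt | hlt
    · rw [key x hx y hy hlt hev, hsx, hIy]
    · rw [posAdj_comm, key y hy x hx hlt hev.symm, hsy, hIx]

/-- The self-maps of `[k]` of rank at least `ρ`; their number bounds the levels needed. -/
noncomputable def highRank (k ρ : ℕ) : Finset (Fin k → Fin k) :=
  Finset.univ.filter fun f => ρ ≤ fnRank f

/-- Downward induction on the rank: positions whose pairwise composites all have rank at
least `ρ` need one level for each self-map of rank at least `ρ`. -/
lemma colorable_of_rank {k : ℕ} (hk : 0 < k) (c : ℕ → Fin k) (E : ℕ → Finset (Fin k))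
    (r : ℕ → Fin k → Fin k) (j : ℕ) : ∀ ρ, ρ + j = k + 1 → ∀ A : Set ℕ,
    (∀ x ∈ A, ∀ y ∈ A, x < y → ρ ≤ fnRank (recol r x y)) →
    ColorableBy (PosAdj c E r) (k * 2 ^ (k + 1)) (highRank k ρ).card A := by
  induction j with
  | zero =>
    intro ρ hρ A hA
    have hpos : 0 < (k * 2 ^ (k + 1)) ^ (highRank k ρ).card := by positivity
    refine ⟨fun _ => ⟨0, hpos⟩, fun i => Layered.of_subsingleton ?_⟩
    have hno : ∀ x ∈ A, ∀ y ∈ A, ¬ x < y := by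
      intro x hx y hy hxy
      have := hA x hx y hy hxy
      have := fnRank_le (recol r x y)
      omega
    rintro x ⟨hx, -⟩ y ⟨hy, -⟩
    have := hno x hx y hy
    have := hno y hy x hx
    omega
  | succ j ih =>
    intro ρ hρ A hA
    -- `a` is the least element of `A`; its value is irrelevant when `A` is empty
    obtain ⟨a, haA⟩ : ∃ a, ∀ x ∈ A, a ≤ x ∧ a ∈ A := by
      rcases A.eq_empty_or_nonempty with rfl | hne
      · exact ⟨0, by simp⟩
      · exact ⟨sInf A, fun x hx => ⟨Nat.sInf_le hx, Nat.sInf_mem hne⟩⟩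
    have inner : ∀ F : Finset (Fin k → Fin k), (∀ t ∈ F, fnRank t = ρ) → ∀ B : Set ℕ,
        (∀ x ∈ B, a ≤ x) →
        (∀ x ∈ B, ∀ y ∈ B, ∀ z, x < z → z ≤ y → IsCut r ρ a z → recol r a z ∈ F) →
        ColorableBy (PosAdj c E r) (k * 2 ^ (k + 1)) ((highRank k (ρ + 1)).card + F.card) B := by
      intro F
      induction F using Finset.induction_on with
      | empty =>
        intro _ B haB hB
        refine ih (ρ + 1) (by omega) B fun x hx y hy hxy => ?_
        by_contra hlt
        obtain ⟨z, h1, h2, h3⟩ := exists_cut_of_rank_le (haB x hx) hxy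
          (Nat.lt_succ_iff.mp (not_le.mp hlt))
        exact absurd (hB x hx y hy z h1 h2 h3) (by simp)
      | insert t F htF ihF =>
        intro hF B haB hB
        rw [Finset.card_insert_of_notMem htF, ← add_assoc]
        refine colorable_split c E r (hF t (Finset.mem_insert_self _ _)) haB fun C hC hcut => ?_
        refine ihF (fun u hu => hF u (Finset.mem_insert_of_mem hu)) C
          (fun x hx => haB x (hC hx)) fun x hx y hy z h1 h2 h3 => ?_
        refine (Finset.mem_insert.mp (hB x (hC hx) y (hC hy) z h1 h2 h3)).resolve_left fun h => ?_
        exact hcut x hx y hy z h1 h2 ⟨h3, h⟩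
    have hsplit : (highRank k ρ).card = (highRank k (ρ + 1)).card +
        (Finset.univ.filter fun f : Fin k → Fin k => fnRank f = ρ).card := by
      rw [← Finset.card_union_of_disjoint]
      · congr 1
        ext f
        simp only [highRank, Finset.mem_filter, Finset.mem_univ, true_and, Finset.mem_union]
        omega
      · rw [highRank, Finset.disjoint_filter]
        intro f _ h
        omega
    rw [hsplit]
    refine inner _ (by simp) A (fun x hx => (haA x hx).1) fun x hx y hy z h1 h2 h3 => ?_
    obtain ⟨hax, ha⟩ := haA x hx
    simp only [Finset.mem_filter, Finset.mem_univ, true_and]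
    apply le_antisymm
    · exact (isCut_start r ρ a).rank_le h3 (by omega)
    · refine (hA a ha y hy (by omega)).trans ?_
      rw [recol_trans r (show a ≤ z by omega) h2]
      exact fnRank_comp_le_right _ _

/-! ### The graph of a word -/

lemma nlcRun_range_succ {V : Type} {k : ℕ} (w : ℕ → NLCLetter V k) (n : ℕ) :
    nlcRun ((List.range (n + 1)).map w) = nlcStep (nlcRun ((List.range n).map w)) (w n) := by
  simp [nlcRun, List.range_succ, List.foldl_append]

lemma nlcRun_absent {V : Type} {k : ℕ} (w : ℕ → NLCLetter V k) (n : ℕ) (x : V)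
    (hx : ∀ i < n, (w i).v ≠ x) : (nlcRun ((List.range n).map w)).2 x = none ∧
      ∀ y, ¬ (nlcRun ((List.range n).map w)).1 x y ∧ ¬ (nlcRun ((List.range n).map w)).1 y x := by
  induction n with
  | zero => simp [nlcRun]
  | succ n ih =>
    obtain ⟨h1, h2⟩ := ih fun i hi => hx i (by omega)
    have h3 : x ≠ (w n).v := (hx n (by omega)).symm
    rw [nlcRun_range_succ]
    simp [nlcStep, h1, h2, h3]

lemma nlcRun_spec {V : Type} {k : ℕ} (w : ℕ → NLCLetter V k) (n : ℕ)
    (hw : ∀ i < n, ∀ j < n, (w i).v = (w j).v → i = j) :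
    (∀ i < n, (nlcRun ((List.range n).map w)).2 (w i).v =
      some (colAt (fun i => (w i).c) (fun i => (w i).r) i n)) ∧
    ∀ i < n, ∀ j < n, ((nlcRun ((List.range n).map w)).1 (w i).v (w j).v ↔
      PosAdj (fun i => (w i).c) (fun i => (w i).e) (fun i => (w i).r) i j) := by
  induction n with
  | zero => simp
  | succ n ih =>
    obtain ⟨h1, h2⟩ := ih fun i hi j hj => hw i (by omega) j (by omega)
    have hne : ∀ i < n, (w i).v ≠ (w n).v := fun i hi h => by
      have := hw i (by omega) n (by omega) h
      omega
    obtain ⟨h3, h4⟩ := nlcRun_absent w n (w n).v hne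
    rw [nlcRun_range_succ]
    constructor
    · intro i hi
      rcases Nat.lt_succ_iff_lt_or_eq.mp hi with hi | rfl
      · simp only [nlcStep, if_neg (hne i hi), h1 i hi, Option.map_some]
        rw [colAt_trans _ _ hi (Nat.le_succ n)]
        simp [recol, recol_self]
      · simp [nlcStep, colAt, recol_self]
    · intro i hi j hj
      rcases Nat.lt_succ_iff_lt_or_eq.mp hi with hi | rfl <;>
      rcases Nat.lt_succ_iff_lt_or_eq.mp hj with hj | rfl
      · simp [nlcStep, hne i hi, hne j hj, h2 i hi j hj]
      · rw [posAdj_of_lt _ _ _ hi]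
        simp [nlcStep, hne i hi, h4, h3, h1 i hi]
      · rw [posAdj_comm, posAdj_of_lt _ _ _ hj]
        simp [nlcStep, hne j hj, h4, h3, h1 j hj]
      · simp [nlcStep, h3, h4, PosAdj]

/-! ### From layered cotrees to cotrees -/

lemma dropLast_iterate (l : List ℕ) (n : ℕ) :
    (List.dropLast)^[n] l = l.take (l.length - n) := by
  induction n with
  | zero => simp
  | succ n ih =>
    rw [Function.iterate_succ_apply', ih, List.dropLast_eq_take, List.take_take]
    congr 1
    simp
    omega

/-- The tree of prefixes of the addresses realizes a layered cotree as a `Cotree`. -/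
lemma exists_cotree {α : Type} [Finite α] [Nonempty α] (H : SimpleGraph α) (pos : α → ℕ)
    (hpos : Function.Injective pos) {R : ℕ → ℕ → Prop} {d : ℕ} {A : Set ℕ} (hA : ∀ a, pos a ∈ A)
    (hR : ∀ a b, H.Adj a b ↔ R (pos a) (pos b)) (h : Layered R d A) :
    ∃ T : Cotree H, T.depthLE (d + 1) := by
  obtain ⟨addr, lab, h1, h2, h3⟩ := h
  let g : α → List ℕ := fun a => addr (pos a)
  have gl : ∀ a, (g a).length = d := fun a => h1 _ (hA a)
  have ginj : Function.Injective g := fun a b hab => hpos (h2 (hA a) (hA b) hab)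
  let W : Type := {l : List ℕ // ∃ a, l <+: g a}
  have hfin : Finite W := by
    have : Set.Finite {l : List ℕ | ∃ a, l <+: g a} := by
      have : {l : List ℕ | ∃ a, l <+: g a} ⊆ ⋃ a, ((g a).inits.toFinset : Set (List ℕ)) := by
        rintro l ⟨a, ha⟩
        simp only [Set.mem_iUnion, List.coe_toFinset, Set.mem_ofPred_eq, List.mem_inits]
        exact ⟨a, ha⟩
      exact (Set.finite_iUnion fun a => Finset.finite_toSet _).subset this
    exact this.to_subtype
  let par : W → W := fun w =>
    ⟨w.1.dropLast, w.2.imp fun a ha => (List.dropLast_prefix _).trans ha⟩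
  have hit : ∀ (n : ℕ) (w : W), (par^[n] w).1 = w.1.take (w.1.length - n) := by
    intro n w
    rw [← dropLast_iterate]
    induction n with
    | zero => rfl
    | succ n ih => rw [Function.iterate_succ_apply', Function.iterate_succ_apply', ← ih]
  let root : W := ⟨[], ‹Nonempty α›.elim fun a => ⟨a, List.nil_prefix⟩⟩
  have hroot : ∀ w : W, par^[w.1.length] w = root := fun w => Subtype.ext (by simp [hit, root])
  have hanc : ∀ x w : W, IsAnc par x w ↔ x.1 <+: w.1 := by
    intro x w
    constructor
    · rintro ⟨n, rfl⟩
      rw [hit]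
      exact List.take_prefix _ _
    · intro hx
      refine ⟨w.1.length - x.1.length, Subtype.ext ?_⟩
      rw [hit, Nat.sub_sub_self hx.length_le]
      exact (List.prefix_iff_eq_take.mp hx).symm
  let emb : α ↪ W := ⟨fun a => ⟨g a, a, List.prefix_rfl⟩, fun a b hab =>
    ginj (congrArg Subtype.val hab)⟩
  refine ⟨⟨W, Fintype.ofFinite W, root, par, rfl, fun w => ⟨_, hroot w⟩, emb, ?_,
    fun w => lab w.1, ?_⟩, ?_⟩
  · rintro ⟨l, a, hla⟩
    constructor
    · intro hleaf
      refine ⟨a, Subtype.ext ?_⟩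
      change g a = l
      by_contra hne
      have hlt : l.length < (g a).length :=
        lt_of_le_of_ne hla.length_le fun he => hne (hla.eq_of_length he).symm
      have hl := List.prefix_iff_eq_take.mp hla
      -- the prefix of `g a` that is one longer than `l` is a child of `l`
      have := hleaf ⟨(g a).take (l.length + 1), a, List.take_prefix _ _⟩ (Subtype.ext (by
        change ((g a).take (l.length + 1)).dropLast = l
        rw [List.dropLast_eq_take, List.take_take, List.length_take,
          show min (min (l.length + 1) (g a).length - 1) (l.length + 1) = l.length by omega]
        exact hl.symm))
      have := congrArg (fun w : W => w.1.length) this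
      simp only [List.length_take] at this
      omega
    · rintro ⟨b, hb⟩ ⟨l', a', hl'⟩ hpar
      have hb : g b = l := congrArg Subtype.val hb
      have hpar : l'.dropLast = l := congrArg Subtype.val hpar
      refine Subtype.ext ?_
      change l' = l
      have e1 := hl'.length_le
      rw [gl] at e1
      have e2 : l'.length - 1 = d := by rw [← List.length_dropLast, hpar, ← hb, gl]
      have e3 : l'.length = 0 := by omega
      rw [List.length_eq_zero_iff] at e3
      subst e3
      exact hpar
  · rintro a b hab x ⟨hxa, hxb, hx⟩
    rw [hanc] at hxa hxb
    have ea : x.1 = (g a).take x.1.length := List.prefix_iff_eq_take.mp hxa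
    have eb : x.1 = (g b).take x.1.length := List.prefix_iff_eq_take.mp hxb
    rw [hR]
    conv_rhs => rw [ea]
    refine h3 _ (hA a) _ (hA b) x.1.length (ea.symm.trans eb) fun he => ?_
    -- a longer common prefix would be a common ancestor not above `x`
    have := hx ⟨(g a).take (x.1.length + 1), a, List.take_prefix _ _⟩
      ((hanc _ _).2 (List.take_prefix _ _)) ((hanc _ _).2 (by
        change (g a).take (x.1.length + 1) <+: g b
        change (g a).take (x.1.length + 1) = (g b).take (x.1.length + 1) at he
        rw [he]
        exact List.take_prefix _ _))
    have hlen := ((hanc _ _).1 this).length_le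
    simp only [List.length_take, gl] at hlen
    have hd : d ≤ x.1.length := by omega
    apply hab
    apply ginj
    rw [← List.take_of_length_le (l := g a) (i := x.1.length) (by rw [gl]; exact hd),
      ← List.take_of_length_le (l := g b) (i := x.1.length) (by rw [gl]; exact hd)]
    exact ea.symm.trans eb
  · intro a
    unfold pathNodes
    have : sInf {n : ℕ | par^[n] (emb a) = root} ≤ d := by
      apply Nat.sInf_le
      have := hroot (emb a)
      rwa [show (emb a).1.length = d from gl a] at this
    exact Nat.succ_le_succ this

/-- Every finite graph of linear NLC-width at most `k` admits a partition of its vertex set into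
at most `(k·2^{k+1})^{3·k^k}` parts, each inducing a cograph with a cotree of depth at
most `3·k^k`. -/
theorem linNLC_partition_cographs {V : Type} [Fintype V] (k : ℕ) (G : SimpleGraph V)
    (h : LinNLCWidthLE G k) :
    ∃ m : ℕ, m ≤ (k * 2 ^ (k + 1)) ^ (3 * k ^ k) ∧
      ∃ c : V → Fin m, Function.Surjective c ∧
        ∀ i : Fin m, ∃ T : Cotree (SimpleGraph.induce {x : V | c x = i} G),
          T.depthLE (3 * k ^ k) := by
  obtain ⟨k', hk', α, hnd, hall, hadj⟩ := h
  rcases isEmpty_or_nonempty V with hV | hV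
  · exact ⟨0, Nat.zero_le _, fun v => (hV.false v).elim, fun i => i.elim0, fun i => i.elim0⟩
  obtain ⟨v0⟩ := id hV
  obtain ⟨a0, ha0, -⟩ := List.mem_map.mp (hall v0)
  have hkpos : 0 < k' := a0.c.pos
  let w : ℕ → NLCLetter V k' := fun i => α.getD i a0
  have hα : (List.range α.length).map w = α := by
    apply List.ext_getElem
    · simp
    · intro i h1 h2
      simp [w, h2]
  have hw : ∀ i < α.length, ∀ j < α.length, (w i).v = (w j).v → i = j := by
    intro i hi j hj hij
    have := (List.Nodup.getElem_inj_iff hnd (i := i) (j := j) (hi := by simpa using hi)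
      (hj := by simpa using hj)).mp (by simpa [w, hi, hj] using hij)
    exact this
  obtain ⟨-, hrun⟩ := nlcRun_spec w α.length hw
  rw [hα] at hrun
  have hex : ∀ v : V, ∃ i < α.length, (w i).v = v := by
    intro v
    obtain ⟨b, hb, rfl⟩ := List.mem_map.mp (hall v)
    obtain ⟨i, hi, rfl⟩ := List.getElem_of_mem hb
    exact ⟨i, hi, by simp [w, hi]⟩
  choose pos hlt hpos using hex
  have hinj : Function.Injective pos := fun u v huv => by rw [← hpos u, ← hpos v, huv]
  have hG : ∀ u v, G.Adj u v ↔ PosAdj (fun i => (w i).c) (fun i => (w i).e) (fun i => (w i).r)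
      (pos u) (pos v) := by
    intro u v
    rw [hadj, ← hrun _ (hlt u) _ (hlt v), hpos, hpos]
  -- every composite of recolorings has rank at least one, so the rank hypothesis is void at `1`
  obtain ⟨t, ht⟩ := colorable_of_rank hkpos (fun i => (w i).c) (fun i => (w i).e)
    (fun i => (w i).r) k' 1 (by omega) Set.univ (fun x _ y _ _ => by
      apply Finset.card_pos.mpr
      exact ⟨_, Finset.mem_image_of_mem _ (Finset.mem_univ ⟨0, hkpos⟩)⟩)
  have hL : (highRank k' 1).card ≤ k ^ k := by
    calc (highRank k' 1).card ≤ Fintype.card (Fin k' → Fin k') := Finset.card_le_univ _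
      _ = k' ^ k' := by simp
      _ ≤ k ^ k' := Nat.pow_le_pow_left hk' _
      _ ≤ k ^ k := Nat.pow_le_pow_right (by omega) hk'
  have hkk : 0 < k ^ k := Nat.pow_pos (by omega)
  let e := Fintype.equivFin (Set.range fun v => t (pos v))
  refine ⟨Fintype.card (Set.range fun v => t (pos v)), ?_, fun v => e ⟨t (pos v), v, rfl⟩, ?_, ?_⟩
  · calc Fintype.card (Set.range fun v => t (pos v))
        ≤ Fintype.card (Fin ((k' * 2 ^ (k' + 1)) ^ (highRank k' 1).card)) :=
          Fintype.card_subtype_le _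
      _ = (k' * 2 ^ (k' + 1)) ^ (highRank k' 1).card := Fintype.card_fin _
      _ ≤ (k * 2 ^ (k + 1)) ^ (highRank k' 1).card := by gcongr; norm_num
      _ ≤ (k * 2 ^ (k + 1)) ^ (3 * k ^ k) := by
        apply Nat.pow_le_pow_right
        · have : 0 < k := by omega
          positivity
        · omega
  · intro i
    obtain ⟨⟨_, v, rfl⟩, rfl⟩ := e.surjective i
    exact ⟨v, rfl⟩
  · intro i
    obtain ⟨⟨_, v, rfl⟩, rfl⟩ := e.surjective i
    have : Nonempty {x : V | e ⟨t (pos x), x, rfl⟩ = e ⟨t (pos v), v, rfl⟩} := ⟨⟨v, rfl⟩⟩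
    obtain ⟨T, hT⟩ := exists_cotree
      (SimpleGraph.induce {x : V | e ⟨t (pos x), x, rfl⟩ = e ⟨t (pos v), v, rfl⟩} G)
      (fun x => pos x.1) (fun x y hxy => Subtype.ext (hinj hxy))
      (A := {x | x ∈ Set.univ ∧ t x = t (pos v)})
      (fun x => ⟨trivial, congrArg Subtype.val (e.injective x.2)⟩)
      (fun x y => hG x.1 y.1) (ht (t (pos v)))
    exact ⟨T, fun x => (hT x).trans (by omega)⟩
end
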